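/- arXiv:2403.14162 — 6 statements merged into one kernel-verified Lean document; each statement's English description precedes it below -/
import Mathlib

section
/- Let m = √(2/(1+e²)) and M = e·√(2/(1+e²)), and let α be a real number with m < α < M. Define r_α = α − m if m < α ≤ (1+e)/√(2(1+e²)), and r_α = M − α if (1+e)/√(2(1+e²)) ≤ α < M. Then the open disk {w ∈ ℂ : |w − α| < r_α} is contained in 𝔅(𝔻); that is, for every w with |w − α| < r_α there exists z ∈ 𝔻 with 𝔅(z) = w. -/
open Complex Metric

/-- The bean function 𝔅(z) = (1 + tanh z)^(1/2), principal branch of the complex power. -/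
noncomputable def Bean (z : ℂ) : ℂ := (1 + Complex.tanh z) ^ ((1:ℂ)/2)

/-- The open unit disk in ℂ. -/
def unitDisk : Set ℂ := Metric.ball (0:ℂ) 1

/-- `Subord p g` : p is subordinate to g on the unit disk. -/
def Subord (p g : ℂ → ℂ) : Prop :=
  ∃ ω : ℂ → ℂ, AnalyticOnNhd ℂ ω unitDisk ∧ ω 0 = 0 ∧
    (∀ z ∈ unitDisk, ‖ω z‖ < 1) ∧ ∀ z ∈ unitDisk, p z = g (ω z)

theorem bean_num : Real.sinh 1 * Real.cosh 1 ≤ Real.sin 1 ^ 2 * (Real.sinh 1 ^ 2 + Real.cosh 1) := by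
  have h1 := Real.cos_one_le
  have h2 := Real.cos_one_pos
  have h3 := Real.sin_sq_add_cos_sq 1
  have hs : (56:ℝ)/81 ≤ Real.sin 1 ^ 2 := by nlinarith
  have e1 := Real.exp_one_gt_d9
  have e2 := Real.exp_one_lt_d9
  have i1 : Real.exp (-1) ≤ 0.368 := by
    rw [Real.exp_neg, inv_le_comm₀ (by positivity) (by norm_num)]; norm_num; linarith
  have i2 : 0.367 ≤ Real.exp (-1) := by
    rw [Real.exp_neg, le_inv_comm₀ (by norm_num) (by positivity)]; norm_num; linarith
  have c1 : (1.542:ℝ) ≤ Real.cosh 1 := by rw [Real.cosh_eq]; linarith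
  have c2 : Real.cosh 1 ≤ 1.544 := by rw [Real.cosh_eq]; linarith
  have s1 : (1.174:ℝ) ≤ Real.sinh 1 := by rw [Real.sinh_eq]; linarith
  have s2 : Real.sinh 1 ≤ 1.177 := by rw [Real.sinh_eq]; linarith
  have : Real.sinh 1 * Real.cosh 1 ≤ 1.177 * 1.544 := by gcongr
  have h5 : (56:ℝ)/81 * (1.174^2 + 1.542) ≤ Real.sin 1 ^ 2 * (Real.sinh 1 ^ 2 + Real.cosh 1) := by
    gcongr
  norm_num at *
  linarith

theorem bean_sinh (a : ℝ) (h0 : 0 ≤ a) (h1 : a ≤ 1) :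
    Real.sinh 1 ^ 2 - Real.sinh a ^ 2 ≤ Real.sinh 1 * Real.cosh 1 * (1 - a ^ 2) := by
  have hd : ∀ x : ℝ, HasDerivAt (fun x => Real.sinh x ^ 2 - Real.sinh 1 * Real.cosh 1 * x ^ 2)
      (2 * Real.sinh x * Real.cosh x - Real.sinh 1 * Real.cosh 1 * (2 * x)) x := by
    intro x
    have := ((Real.hasDerivAt_sinh x).pow 2).sub
      (((hasDerivAt_id x).pow 2).const_mul (Real.sinh 1 * Real.cosh 1))
    refine this.congr_deriv ?_
    simp
  have hanti : AntitoneOn (fun x => Real.sinh x ^ 2 - Real.sinh 1 * Real.cosh 1 * x ^ 2) (Set.Icc 0 1) := by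
    apply antitoneOn_of_deriv_nonpos (convex_Icc 0 1)
    · exact fun x _ => (hd x).continuousAt.continuousWithinAt
    · exact fun x _ => (hd x).differentiableAt.differentiableWithinAt
    · intro x hx
      rw [interior_Icc] at hx
      rw [(hd x).deriv]
      have hconv : ConvexOn ℝ (Set.Ici 0) Real.sinh := by
        apply convexOn_of_deriv2_nonneg (convex_Ici 0) Real.continuous_sinh.continuousOn
          Real.differentiable_sinh.differentiableOn
        · rw [Real.deriv_sinh]; exact Real.differentiable_cosh.differentiableOn
        · intro y hy
          rw [interior_Ici] at hy
          simp only [Function.iterate_succ, Function.iterate_zero, Function.comp, Real.deriv_sinh, Real.deriv_cosh, id]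
          exact Real.sinh_nonneg_iff.2 hy.le
      have := hconv.2 (by simp : (0:ℝ) ∈ Set.Ici 0) (by simp : (2:ℝ) ∈ Set.Ici 0)
        (by linarith [hx.2] : 0 ≤ 1 - x) hx.1.le (by ring)
      simp only [smul_eq_mul, mul_zero, zero_add, Real.sinh_zero] at this
      rw [mul_comm x 2, Real.sinh_two_mul] at this
      have h2 := Real.sinh_two_mul 1
      norm_num at h2
      rw [h2] at this
      linarith
  have := hanti (⟨h0, h1⟩ : a ∈ Set.Icc (0:ℝ) 1) (by simp : (1:ℝ) ∈ Set.Icc (0:ℝ) 1) h1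
  simp only at this
  linarith

theorem bean_sin (b : ℝ) (h0 : 0 ≤ b) (hb : b ≤ Real.pi / 2) (t : ℝ) (ht1 : t ≤ 1) (ht : t ≤ b ^ 2) :
    t * Real.sin 1 ^ 2 ≤ Real.sin b ^ 2 := by
  have s1 : 0 < Real.sin 1 := Real.sin_pos_of_pos_of_lt_pi one_pos (by linarith [Real.pi_gt_three])
  rcases le_total b 1 with h | h
  · have hc := (strictConcaveOn_sin_Icc.concaveOn).2 (by simp [Real.pi_pos.le] : (0:ℝ) ∈ Set.Icc 0 Real.pi)
      (by constructor <;> linarith [Real.pi_gt_three] : (1:ℝ) ∈ Set.Icc 0 Real.pi)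
      (by linarith : 0 ≤ 1 - b) h0 (by ring)
    simp only [smul_eq_mul, mul_zero, zero_add, Real.sin_zero, mul_one] at hc
    have : (b * Real.sin 1)^2 ≤ Real.sin b ^ 2 := by gcongr
    nlinarith [sq_nonneg (Real.sin 1)]
  · have : Real.sin 1 ≤ Real.sin b := Real.sin_le_sin_of_le_of_le_pi_div_two (by linarith [Real.pi_gt_three]) hb h
    have : Real.sin 1 ^2 ≤ Real.sin b ^ 2 := by gcongr
    nlinarith [sq_nonneg (Real.sin 1)]

theorem bean_S (a b : ℝ) (hb : |b| ≤ Real.pi / 2) (hab : 1 ≤ a ^ 2 + b ^ 2) :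
    Real.sinh 1 ^ 2 - Real.sinh a ^ 2 ≤ Real.sin b ^ 2 * (Real.sinh 1 ^ 2 + Real.cosh 1) := by
  have e1 : Real.sinh a ^ 2 = Real.sinh |a| ^ 2 := by
    rcases abs_choice a with h | h <;> rw [h] <;> simp
  have e2 : Real.sin b ^ 2 = Real.sin |b| ^ 2 := by
    rcases abs_choice b with h | h <;> rw [h] <;> simp
  have hp : 0 < Real.sinh 1 ^ 2 + Real.cosh 1 := by positivity
  have s1 : 0 < Real.sinh 1 := Real.sinh_pos_iff.2 one_pos
  rcases le_total |a| 1 with h | h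
  · have h1 := bean_sinh |a| (abs_nonneg a) h
    have h2 := bean_sin |b| (abs_nonneg b) hb (1 - a ^ 2) (by nlinarith) (by rw [sq_abs]; linarith)
    rw [sq_abs] at h1
    rw [e1, e2]
    have h3 : 0 ≤ 1 - a ^ 2 := by
      have := abs_nonneg a
      nlinarith [sq_abs a]
    calc _ ≤ _ := h1
      _ ≤ (Real.sin 1 ^ 2 * (Real.sinh 1 ^ 2 + Real.cosh 1)) * (1 - a ^ 2) := by
        exact mul_le_mul_of_nonneg_right bean_num h3
      _ = ((1 - a^2) * Real.sin 1 ^ 2) * (Real.sinh 1 ^ 2 + Real.cosh 1) := by ring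
      _ ≤ _ := by gcongr
  · have : Real.sinh 1 ≤ Real.sinh |a| := Real.sinh_le_sinh.2 h
    have : Real.sinh 1 ^ 2 ≤ Real.sinh |a| ^ 2 := by gcongr
    have : 0 ≤ Real.sin b ^ 2 * (Real.sinh 1 ^ 2 + Real.cosh 1) := by positivity
    rw [e1]; linarith

theorem bean_core (a b N k : ℝ) (hb : |b| ≤ Real.pi / 2) (hab : 1 ≤ a ^ 2 + b ^ 2)
    (hk : k * Real.cosh 1 = 1) (hN2 : N ^ 2 = Real.cosh a ^ 2 - Real.sin b ^ 2) :
    (1 + k) * (Real.exp a * N + (Real.exp a ^ 2 + (1 - 2 * Real.sin b ^ 2)) / 2)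
      ≤ (Real.exp a + k * N) ^ 2 := by
  have hS := bean_S a b hb hab
  have hc1 := Real.cosh_sq 1
  have hca := Real.cosh_sq a
  have hc : 0 < Real.cosh a := Real.cosh_pos a
  have hC : 1 ≤ Real.cosh 1 := Real.one_le_cosh 1
  have hk0 : 0 < k := by
    by_contra h
    nlinarith
  have hk1 : k ≤ 1 := by nlinarith
  have hE : 2 * Real.cosh a = Real.exp a + Real.exp (-a) := by rw [Real.cosh_eq]; ring
  have hEE : Real.exp a * Real.exp (-a) = 1 := by rw [← Real.exp_add]; simp
  have hE2 : Real.exp a ^ 2 = 2 * Real.exp a * Real.cosh a - 1 := by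
    linear_combination (-Real.exp a) * hE - hEE
  have hepos := Real.exp_pos a
  set e := Real.exp a
  set c := Real.cosh a
  set s := Real.sin b ^ 2 with hs
  have hs0 : 0 ≤ s := sq_nonneg _
  -- scaled estimate
  have h1 : 1 ≤ k ^ 2 * c ^ 2 + s * (1 + k - k ^ 2) := by
    have : 0 ≤ k ^ 2 * (s * (Real.cosh 1 ^ 2 - 1 + Real.cosh 1) - (Real.cosh 1 ^ 2 - c ^ 2)) := by
      apply mul_nonneg (sq_nonneg _)
      have : Real.sinh 1 ^ 2 = Real.cosh 1 ^ 2 - 1 := by linarith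
      rw [this] at hS
      linarith
    have hk2 : k ^ 2 * Real.cosh 1 ^ 2 = 1 := by rw [← mul_pow, hk, one_pow]
    have hk3 : k ^ 2 * Real.cosh 1 = k := by rw [pow_two, mul_assoc, hk, mul_one]
    have : k ^ 2 * (s * (Real.cosh 1 ^ 2 - 1 + Real.cosh 1) - (Real.cosh 1 ^ 2 - c ^ 2)) =
      s * (1 - k ^ 2 + k) - 1 + k ^ 2 * c ^ 2 := by
      linear_combination (s - 1) * hk2 + s * hk3
    linarith
  -- AM-GM
  have h2 : 2 * (e * N) ≤ 2 * e * c - e * s / c := by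
    have : 0 ≤ e * (c - N) ^ 2 / c := by positivity
    have h3 : e * (c - N) ^ 2 / c = 2 * e * c - e * s / c - 2 * (e * N) := by
      field_simp
      linear_combination hN2
    linarith
  have h3 : 0 ≤ e * s / c := by positivity
  have h4 : (1 - k) * (2 * (e * N)) ≤ (1 - k) * (2 * e * c) := by
    apply mul_le_mul_of_nonneg_left _ (by linarith)
    linarith
  have : (e + k * N) ^ 2 - (1 + k) * (e * N + (e ^ 2 + (1 - 2 * s)) / 2) =
    ((1 - k) * (2 * e * c) - (1 - k) * (2 * (e * N))) / 2 + (k ^ 2 * c ^ 2 + s * (1 + k - k ^ 2) - 1) := by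
    linear_combination k ^ 2 * hN2 + (1 - k) / 2 * hE2
  linarith

theorem bean_main (w : ℂ) (k : ℝ) (hk : k * Real.cosh 1 = 1) (hx : 0 < w.re)
    (hw : (w.re ^ 2 + w.im ^ 2 + k) ^ 2 < 2 * (1 + k) * w.re ^ 2) :
    ∃ z ∈ unitDisk, Bean z = w := by
  have hk0 : 0 < k := by
    have := Real.cosh_pos 1
    by_contra h
    nlinarith
  have hw0 : w ≠ 0 := by rintro rfl; simp at hx
  have h2 : (2 - w ^ 2) ≠ 0 := by
    intro h
    have hre := congrArg Complex.re h
    have him := congrArg Complex.im h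
    simp [pow_two] at hre him
    have : w.im = 0 := by
      have : w.re * w.im = 0 := by linarith
      rcases mul_eq_zero.1 this with h | h
      · linarith
      · exact h
    rw [this] at hre hw
    have : w.re ^ 2 = 2 := by linarith
    rw [this] at hw
    nlinarith
  set z : ℂ := Complex.log (w ^ 2 / (2 - w ^ 2)) / 2 with hz
  have hq : w ^ 2 / (2 - w ^ 2) ≠ 0 := div_ne_zero (pow_ne_zero _ hw0) h2
  have hexp : Complex.exp z ^ 2 = w ^ 2 / (2 - w ^ 2) := by
    rw [← Complex.exp_nat_mul, hz]
    push_cast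
    rw [mul_div_cancel₀ _ (two_ne_zero), Complex.exp_log hq]
  have he0 := Complex.exp_ne_zero z
  have hcosh : w ^ 2 * Complex.cosh z = Complex.exp z := by
    rw [eq_div_iff h2] at hexp
    rw [Complex.cosh, Complex.exp_neg]
    field_simp
    linear_combination -hexp
  have hc0 : Complex.cosh z ≠ 0 := by
    intro h; rw [h, mul_zero] at hcosh; exact he0 hcosh.symm
  refine ⟨z, ?_, ?_⟩
  · rw [unitDisk, mem_ball_zero_iff]
    by_contra hcon
    push Not at hcon
    have hb : |z.im| ≤ Real.pi / 2 := by
      have : z.im = Complex.arg (w ^ 2 / (2 - w ^ 2)) / 2 := by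
        rw [hz, ← Complex.log_im]; simp
      rw [this, abs_div, abs_two]
      have := Complex.abs_arg_le_pi (w ^ 2 / (2 - w ^ 2))
      linarith
    have hab : 1 ≤ z.re ^ 2 + z.im ^ 2 := by
      have h := Complex.sq_norm z
      rw [Complex.normSq_apply] at h
      nlinarith
    set P := w.re ^ 2 + w.im ^ 2 with hP
    have hP0 : 0 < P := by positivity
    have hcre : (Complex.cosh z).re = Real.cosh z.re * Real.cos z.im := by
      conv_lhs => rw [← Complex.re_add_im z]
      rw [Complex.cosh_add, Complex.cosh_mul_I, Complex.sinh_mul_I]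
      simp [← Complex.ofReal_cosh, ← Complex.ofReal_sinh, ← Complex.ofReal_cos, ← Complex.ofReal_sin]
    have hcim : (Complex.cosh z).im = Real.sinh z.re * Real.sin z.im := by
      conv_lhs => rw [← Complex.re_add_im z]
      rw [Complex.cosh_add, Complex.cosh_mul_I, Complex.sinh_mul_I]
      simp [← Complex.ofReal_cosh, ← Complex.ofReal_sinh, ← Complex.ofReal_cos, ← Complex.ofReal_sin]
    have hre := congrArg Complex.re hcosh
    have him := congrArg Complex.im hcosh
    simp only [pow_two, Complex.mul_re, Complex.mul_im, hcre, hcim, Complex.exp_re, Complex.exp_im] at hre him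
    have hca := Real.cosh_sq z.re
    have hsc := Real.sin_sq_add_cos_sq z.im
    have hE : Real.cosh z.re + Real.sinh z.re = Real.exp z.re := Real.cosh_add_sinh z.re
    have hepos := Real.exp_pos z.re
    set e := Real.exp z.re
    set c := Real.cosh z.re
    set S := Real.sinh z.re
    set cb := Real.cos z.im
    set sb := Real.sin z.im
    have hNN : (c * cb) ^ 2 + (S * sb) ^ 2 = c ^ 2 - sb ^ 2 := by
      linear_combination c ^ 2 * hsc - sb ^ 2 * hca
    have hPN : P ^ 2 * (c ^ 2 - sb ^ 2) = e ^ 2 := by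
      rw [← hNN]
      have : e ^ 2 = (e * cb) ^ 2 + (e * sb) ^ 2 := by linear_combination -e ^ 2 * hsc
      rw [this, ← hre, ← him, hP]; ring
    have hRe : (w.re ^ 2 - w.im ^ 2) * (c ^ 2 - sb ^ 2) = (e ^ 2 + (1 - 2 * sb ^ 2)) / 2 := by
      have h1 : (w.re ^ 2 - w.im ^ 2) * ((c * cb) ^ 2 + (S * sb) ^ 2) = (e * cb) * (c * cb) + (e * sb) * (S * sb) := by
        rw [← hre, ← him]; ring
      rw [← hNN, h1, ← hE]
      linear_combination (c * (c + S)) * hsc  + (1/2 - sb ^ 2) * hca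
    have hcore := bean_core z.re z.im (e / P) k hb hab hk (by
      rw [div_pow, ← hPN]; field_simp; rfl)
    have hN : c ^ 2 - sb ^ 2 = (e / P) ^ 2 := by rw [div_pow, ← hPN]; field_simp
    change (1 + k) * (e * (e / P) + (e ^ 2 + (1 - 2 * sb ^ 2)) / 2) ≤ (e + k * (e / P)) ^ 2 at hcore
    rw [← hRe, hN] at hcore
    have hq2 : 0 < (e / P) ^ 2 := by positivity
    have l1 : (1 + k) * (e * (e / P) + (w.re ^ 2 - w.im ^ 2) * (e / P) ^ 2) =
        (2 * (1 + k) * w.re ^ 2) * (e / P) ^ 2 := by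
      have : e * (e / P) = P * (e / P) ^ 2 := by field_simp
      rw [this, hP]; ring
    have l2 : (e + k * (e / P)) ^ 2 = (P + k) ^ 2 * (e / P) ^ 2 := by
      field_simp
    rw [l1, l2] at hcore
    exact absurd (le_of_mul_le_mul_right hcore hq2) (not_le.2 hw)
  · have : 1 + Complex.tanh z = w ^ 2 := by
      rw [Complex.tanh_eq_sinh_div_cosh]
      rw [eq_comm]
      have := Complex.cosh_add_sinh z
      field_simp
      rw [hcosh, this]
    rw [Bean, this]
    have harg := Complex.abs_arg_lt_pi_div_two_iff.2 (Or.inl hx)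
    rw [abs_lt] at harg
    have := Complex.pow_cpow_nat_inv (x := w) (n := 2) two_ne_zero (by push_cast; linarith) (by push_cast; linarith)
    rw [one_div]
    exact_mod_cast this





/-- the disk {|w − α| < r_α} is contained in 𝔅(𝔻). -/
theorem diskInBeanImage (α : ℝ)
    (hm : Real.sqrt (2 / (1 + Real.exp 1 ^ 2)) < α)
    (hM : α < Real.exp 1 * Real.sqrt (2 / (1 + Real.exp 1 ^ 2)))
    (rα : ℝ)
    (hrα : rα = if α ≤ (1 + Real.exp 1) / Real.sqrt (2 * (1 + Real.exp 1 ^ 2))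
        then α - Real.sqrt (2 / (1 + Real.exp 1 ^ 2))
        else Real.exp 1 * Real.sqrt (2 / (1 + Real.exp 1 ^ 2)) - α) :
    ∀ w : ℂ, ‖w - (α:ℂ)‖ < rα → ∃ z ∈ unitDisk, Bean z = w := by

  intro w hw
  have he := Real.exp_pos 1
  have he1 : 1 < Real.exp 1 := by linarith [Real.exp_one_gt_d9]
  have hmul : Real.exp 1 * Real.exp (-1) = 1 := by rw [← Real.exp_add]; simp
  have hcosh : 2 * Real.cosh 1 = Real.exp 1 + Real.exp (-1) := by rw [Real.cosh_eq]; ring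
  set e := Real.exp 1
  have hEp : 0 < 1 + e ^ 2 := by positivity
  set m := Real.sqrt (2 / (1 + e ^ 2)) with hmdef
  have hm0 : 0 < m := by positivity
  have hm2 : m ^ 2 * (1 + e ^ 2) = 2 := by
    rw [hmdef, Real.sq_sqrt (by positivity)]; field_simp
  have hmid : (1 + e) / Real.sqrt (2 * (1 + e ^ 2)) = (m + e * m) / 2 := by
    have : Real.sqrt (2 * (1 + e ^ 2)) = m * (1 + e ^ 2) := by
      rw [← Real.sqrt_sq (by positivity : 0 ≤ m * (1 + e ^ 2))]
      congr 1
      linear_combination -(1 + e ^ 2) * hm2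
    rw [this]
    rw [div_eq_div_iff (by positivity) (by norm_num)]
    linear_combination -(1 + e) * hm2
  rw [hmid] at hrα
  have hn := Complex.sq_norm (w - (α:ℂ))
  rw [Complex.normSq_apply] at hn
  simp only [Complex.sub_re, Complex.sub_im, Complex.ofReal_re, Complex.ofReal_im, sub_zero] at hn
  have hab := Complex.abs_re_le_norm (w - (α:ℂ))
  simp only [Complex.sub_re, Complex.ofReal_re] at hab
  have hab' := abs_lt.1 (lt_of_le_of_lt hab hw)
  have hsq : ‖w - (α:ℂ)‖ ^ 2 < rα ^ 2 := by
    have := norm_nonneg (w - (α:ℂ))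
    gcongr
  have hkey : 0 < w.re ∧ w.re ^ 2 + w.im ^ 2 + e * m ^ 2 < (m + e * m) * w.re := by
    split_ifs at hrα with hc
    · subst hrα
      refine ⟨by linarith, ?_⟩
      have : 0 ≤ (m + e * m - 2 * α) * (w.re - m) := mul_nonneg (by linarith) (by linarith)
      nlinarith
    · subst hrα
      have : 0 ≤ (2 * α - (m + e * m)) * (e * m - w.re) := mul_nonneg (by linarith) (by linarith)
      refine ⟨by linarith, ?_⟩
      nlinarith
  obtain ⟨hx, hlt⟩ := hkey
  apply bean_main w (e * m ^ 2) _ hx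
  · have h0 : 0 < w.re ^ 2 + w.im ^ 2 + e * m ^ 2 := by positivity
    calc (w.re ^ 2 + w.im ^ 2 + e * m ^ 2) ^ 2 < ((m + e * m) * w.re) ^ 2 := by gcongr
      _ = _ := by linear_combination w.re ^ 2 * hm2
  · linear_combination (e * m ^ 2) / 2 * hcosh + m ^ 2 / 2 * hmul + hm2 / 2
end

section
/- Let A, B be real numbers with −1 < B < A ≤ 1 and let p(z) = (1+Az)/(1+Bz) on 𝔻. Then p ≺ 𝔅 holds if and only if the following condition on A is satisfied: A ≤ 1 − √(2/(1+e²))·(1−B) in the case (1−AB)/(1−B²) ≤ (1+e)/√(2(1+e²)), and A ≤ e·√(2/(1+e²))·(1+B) − 1 in the case (1−AB)/(1−B²) ≥ (1+e)/√(2(1+e²)). -/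
open Complex Metric

lemma kEq (C c s N S : ℝ) (h : c^2 - s^2 = 1) (hN : N^2 = c^2 - S) (hc : 0 < c) (hcs : 0 < c + s)
   (hC : 1 < C) (hS : 0 ≤ S) (hm : C^2 - c^2 ≤ S * (C^2+C-1)) :
   C*(C+1)*((c+s)*N + N^2 + c*s) ≤ (C*(c+s)+N)^2 := by
  have e : 2*c*((C*(c+s)+N)^2 - C*(C+1)*((c+s)*N + N^2 + c*s)) =
     (C^2-C)*(c+s)*(N-c)^2 + 2*c*(c^2 - C^2) + S*((C^2-C)*(c+s) + 2*c*(C^2+C-1)) := by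
    have hs : s^2 = c^2 - 1 := by linarith
    have hS' : S = c^2 - N^2 := by linarith
    subst hS'
    linear_combination (-2*C^2*c) * h
  have h1 : 0 ≤ (C^2-C)*(c+s)*(N-c)^2 := by
    have : 0 ≤ C^2 - C := by nlinarith
    positivity
  have h2 : 0 ≤ S*((C^2-C)*(c+s)) := by
    have : 0 ≤ C^2 - C := by nlinarith
    positivity
  have h3 := mul_nonneg (by linarith : 0 ≤ 2*c) (sub_nonneg.2 hm)
  have : 0 ≤ 2*c*((C*(c+s)+N)^2 - C*(C+1)*((c+s)*N + N^2 + c*s)) := by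
    rw [e]; nlinarith
  have := nonneg_of_mul_nonneg_right this (by linarith)
  linarith

lemma sinhBound (t : ℝ) (h0 : 0 ≤ t) (h1 : t ≤ 1) :
    Real.cosh 1 ^2 - Real.cosh t ^2 ≤ Real.sinh 1 * Real.cosh 1 * (1 - t^2) := by
  have hconv : ConvexOn ℝ (Set.Ici (0:ℝ)) Real.sinh := by
    apply MonotoneOn.convexOn_of_deriv (convex_Ici 0) Real.continuous_sinh.continuousOn
      Real.differentiable_sinh.differentiableOn
    rw [Real.deriv_sinh]
    intro a ha b hb hab
    simp at ha hb
    apply Real.cosh_le_cosh.2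
    rw [abs_of_pos ha, abs_of_pos hb]; exact hab
  have hd : ∀ x, HasDerivAt (fun t => Real.sinh 1 * Real.cosh 1 * (1 - t^2) + Real.cosh t^2)
      (Real.sinh 1 * Real.cosh 1 * (-(2*x)) + 2*Real.cosh x * Real.sinh x) x := by
    intro x
    have a := ((((hasDerivAt_id x).pow 2).const_sub 1).const_mul (Real.sinh 1 * Real.cosh 1)).add ((Real.hasDerivAt_cosh x).pow 2)
    refine a.congr_deriv ?_
    simp
  have anti : AntitoneOn (fun t => Real.sinh 1 * Real.cosh 1 * (1 - t^2) + Real.cosh t^2) (Set.Icc 0 1) := by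
    apply antitoneOn_of_deriv_nonpos (convex_Icc 0 1)
    · exact fun x _ => (hd x).continuousAt.continuousWithinAt
    · exact fun x _ => (hd x).differentiableAt.differentiableWithinAt
    · intro x hx
      rw [interior_Icc] at hx
      rw [(hd x).deriv]
      have := hconv.2 (show (0:ℝ) ∈ Set.Ici 0 by simp) (show (2:ℝ) ∈ Set.Ici 0 by simp) (show 0 ≤ 1 - x by linarith [hx.2]) hx.1.le (by ring)
      simp at this
      rw [mul_comm x 2, Real.sinh_two_mul] at this
      have h2 := Real.sinh_two_mul 1
      norm_num at h2
      rw [h2] at this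
      nlinarith
  have := anti (a := t) ⟨h0, h1⟩ (b := 1) (by simp) h1
  simp at this
  linarith

lemma sinBound (y : ℝ) (h0 : 0 ≤ y) (h1 : y ≤ 1) : 5/6*y ≤ Real.sin y := by
  rcases h0.eq_or_lt with h | h
  · simp [← h]
  have := Real.sin_gt_sub_cube h
  have h2 : y^3 ≤ y := by nlinarith [mul_nonneg h0 (sub_nonneg.2 h1), mul_nonneg (mul_nonneg h0 h0) (sub_nonneg.2 h1)]
  linarith

lemma coshOne : Real.cosh 1 * (2 * Real.exp 1) = Real.exp 1 ^ 2 + 1 := by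
  rw [Real.cosh_eq, Real.exp_neg]
  have := Real.exp_pos 1
  field_simp

lemma hmBound (x y : ℝ) (h : x^2+y^2=1) :
    Real.cosh 1^2 - Real.cosh x^2 ≤ Real.sin y^2 * (Real.cosh 1^2 + Real.cosh 1 - 1) := by
  have hx : |x| ≤ 1 := abs_le_one_iff_mul_self_le_one.2 (by nlinarith)
  have hy : |y| ≤ 1 := abs_le_one_iff_mul_self_le_one.2 (by nlinarith)
  have a := sinhBound |x| (abs_nonneg x) hx
  have b := sinBound |y| (abs_nonneg y) hy
  have c : (25/36)*y^2 ≤ Real.sin y^2 := by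
    have h3 : Real.sin |y| ^2 = Real.sin y ^2 := by
      rcases abs_cases y with ⟨e, _⟩ | ⟨e, _⟩ <;> rw [e]
      simp
    rw [← h3, ← sq_abs y]
    nlinarith [abs_nonneg y]
  rw [Real.cosh_abs, sq_abs] at a
  have hC := coshOne
  have hs : Real.sinh 1 = Real.exp 1 - Real.cosh 1 := by rw [← Real.cosh_add_sinh]; ring
  have e1 := Real.exp_one_gt_d9
  have e2 := Real.exp_one_lt_d9
  have c1 : Real.cosh 1 ≥ 1.54 := by nlinarith
  have c2 : Real.cosh 1 ≤ 1.55 := by nlinarith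
  have n : Real.sinh 1 * Real.cosh 1 ≤ (25/36) * (Real.cosh 1^2 + Real.cosh 1 - 1) := by
    rw [hs]; nlinarith
  have k : 0 ≤ Real.cosh 1^2 + Real.cosh 1 - 1 := by nlinarith
  have hy2 : 1 - x^2 = y^2 := by linarith
  rw [hy2] at a
  nlinarith [mul_le_mul_of_nonneg_right n (sq_nonneg y), mul_le_mul_of_nonneg_right c k]

lemma keyBound (w p : ℂ) (hw : ‖w‖ = 1) (hp : p^2 * Complex.cosh w = Complex.exp w) :
    Real.cosh 1 * (Real.cosh 1 + 1) * (2 * p.re^2) ≤ (Real.cosh 1 * (p.re^2+p.im^2) + 1)^2 := by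
  have hxy : w.re^2 + w.im^2 = 1 := by
    have := Complex.sq_norm w
    rw [hw, Complex.normSq_apply] at this; nlinarith
  have hwe : w = (w.re:ℂ) + (w.im:ℂ) * Complex.I := (Complex.re_add_im w).symm
  set x := w.re
  set y := w.im
  have hch : Complex.cosh w = ((Real.cosh x * Real.cos y : ℝ):ℂ) + ((Real.sinh x * Real.sin y : ℝ):ℂ) * Complex.I := by
    rw [hwe, Complex.cosh_add, Complex.cosh_mul_I, Complex.sinh_mul_I]
    push_cast; ring
  have hre := congrArg Complex.re hp
  have him := congrArg Complex.im hp
  have hnn := congrArg (fun z => ‖z‖) hp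
  simp only [norm_mul, norm_pow, Complex.norm_exp] at hnn
  rw [hch, Complex.exp_re] at hre
  rw [hch, Complex.exp_im] at him
  have hN2 : ‖Complex.cosh w‖^2 = Real.cosh x^2 - Real.sin y^2 := by
    rw [Complex.sq_norm, hch, Complex.normSq_add_mul_I]
    have := Real.sin_sq_add_cos_sq y
    have := Real.cosh_sq x
    linear_combination Real.cosh x ^2 * (Real.sin_sq_add_cos_sq y) - Real.sin y^2 * (Real.cosh_sq x)
  have hP : ‖p‖^2 = p.re^2+p.im^2 := by rw [Complex.sq_norm, Complex.normSq_apply]; ring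
  rw [hP] at hnn
  set N := ‖Complex.cosh w‖
  have hNpos : 0 < N := by
    have : 0 ≤ N := norm_nonneg _
    rcases this.eq_or_lt with h | h
    · rw [← h] at hnn; have := Real.exp_pos w.re; simp at hnn; linarith [Real.exp_pos w.re]
    · exact h
  have hC : 1 < Real.cosh 1 := Real.one_lt_cosh.2 one_ne_zero
  have main := kEq (Real.cosh 1) (Real.cosh x) (Real.sinh x) N (Real.sin y^2) (Real.cosh_sq_sub_sinh_sq x) hN2 (Real.cosh_pos x)
    (by rw [Real.cosh_add_sinh]; exact Real.exp_pos x) hC (sq_nonneg _) (hmBound x y hxy)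
  have hD : (p.re^2 - p.im^2) * N^2 = N^2 + Real.cosh x * Real.sinh x := by
    rw [show Real.exp w.re = Real.cosh x + Real.sinh x from (Real.cosh_add_sinh x).symm] at hre him
    change _ = _ * Real.cos y at hre
    change _ = _ * Real.sin y at him
    simp only [pow_two, Complex.mul_re, Complex.mul_im, Complex.add_re, Complex.add_im, Complex.ofReal_re, Complex.ofReal_im, Complex.I_re, Complex.I_im, mul_zero, mul_one, zero_mul, add_zero, zero_add, sub_zero] at hre him
    rw [hN2]
    have h1 := Real.sin_sq_add_cos_sq y
    have h2 := Real.cosh_sq x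
    have e : Real.cosh x^2 - Real.sin y^2 = Real.cosh x^2 * Real.cos y^2 + Real.sinh x^2 * Real.sin y^2 := by
      linear_combination - Real.cosh x ^2 * h1 + Real.sin y^2 * h2
    rw [e]
    linear_combination (Real.cosh x * Real.cos y) * hre + (Real.sinh x * Real.sin y) * him + Real.cosh x * Real.sinh x * h1
  rw [Real.cosh_add_sinh, show Real.exp x = _ from hnn.symm] at main
  have : (Real.cosh 1 * (Real.cosh 1 + 1) * (2 * p.re^2)) * N^2 ≤ ((Real.cosh 1 * (p.re^2+p.im^2) + 1)^2) * N^2 := by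
    have e : (Real.cosh 1 * (Real.cosh 1 + 1) * (2 * p.re^2)) * N^2 = Real.cosh 1 * (Real.cosh 1 + 1) * ((p.re ^ 2 + p.im ^ 2) * N * N + N ^ 2 + Real.cosh x * Real.sinh x) := by
      linear_combination Real.cosh 1 * (Real.cosh 1 + 1) * hD
    rw [e]
    refine main.trans (le_of_eq ?_)
    ring
  exact le_of_mul_le_mul_right this (by positivity)

lemma sFacts : ∃ s : ℝ, s = Real.sqrt (2 / (1 + Real.exp 1 ^ 2)) ∧ 0 < s ∧ s^2 * (1 + Real.exp 1^2) = 2 ∧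
    (1 + Real.exp 1) / Real.sqrt (2 * (1 + Real.exp 1 ^ 2)) = (1 + Real.exp 1) * s / 2 := by
  refine ⟨_, rfl, by positivity, ?_, ?_⟩
  · rw [Real.sq_sqrt (by positivity)]; field_simp
  · have : Real.sqrt (2 / (1 + Real.exp 1 ^ 2)) * Real.sqrt (2 * (1 + Real.exp 1 ^ 2)) = 2 := by
      rw [← Real.sqrt_mul (by positivity), show 2 / (1 + Real.exp 1 ^ 2) * (2 * (1 + Real.exp 1 ^ 2)) = 2^2 by field_simp]
      simp
    have h : 0 < Real.sqrt (2 * (1 + Real.exp 1 ^ 2)) := by positivity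
    rw [div_eq_div_iff h.ne' two_ne_zero]
    linear_combination -(1 + Real.exp 1) * this

lemma keyNot (s : ℝ) (hs : 0 < s) (hs2 : s^2 * (1 + Real.exp 1^2) = 2) (w p : ℂ) (hw : ‖w‖ = 1)
    (hp : p^2 * Complex.cosh w = Complex.exp w) :
    (1 + Real.exp 1) * s * p.re ≤ p.re^2 + p.im^2 + Real.exp 1 * s^2 := by
  have k := keyBound w p hw hp
  have hC := coshOne
  have he := Real.exp_pos 1
  have hCp := Real.cosh_pos 1
  set E := Real.exp 1
  set C := Real.cosh 1
  have h1 : E * s^2 * C = 1 := by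
    linear_combination (s^2/2) * hC + hs2/2
  apply abs_le_of_sq_le_sq' _ (by positivity) |>.2
  have h2 : ((1+E)*s)^2 * C = 2 * (C+1) := by
    linear_combination hs2 * C + 2*h1
  have h3 : ((1 + E) * s * p.re)^2 * C^2 ≤ (p.re^2 + p.im^2 + E * s^2)^2 * C^2 := by
    calc _ = C * (C + 1) * (2 * p.re^2) := by linear_combination h2 * C * p.re^2
      _ ≤ _ := k
      _ = _ := by
        rw [← mul_pow]; congr 1; linear_combination -h1
  exact le_of_mul_le_mul_right h3 (by positivity)

lemma slit (s : ℝ) (hs : 0 < s) (hs2 : s^2 * (1 + Real.exp 1^2) = 2) (p : ℂ)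
    (hM : p.re^2 + p.im^2 + Real.exp 1 * s^2 < (1 + Real.exp 1) * s * p.re) :
    0 < p.re ∧ 2/p^2 - 1 ∈ Complex.slitPlane := by
  have he := Real.exp_pos 1
  have he1 := Real.exp_one_gt_two
  set E := Real.exp 1
  have ha : 0 < p.re := by
    by_contra h
    push Not at h
    have : (1+E)*s*p.re ≤ 0 := mul_nonpos_of_nonneg_of_nonpos (by positivity) h
    nlinarith [sq_nonneg p.re, sq_nonneg p.im, mul_pos he (pow_pos hs 2)]
  refine ⟨ha, ?_⟩
  have hp0 : p ≠ 0 := by rintro rfl; simp at ha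
  by_contra hv
  rw [Complex.mem_slitPlane_iff] at hv
  push Not at hv
  obtain ⟨hr, hi⟩ := hv
  have hvp : (2/p^2 - 1 + 1) * p^2 = 2 := by field_simp; ring
  generalize 2/p^2 - 1 = v at *
  have r := congrArg Complex.re hvp
  have i := congrArg Complex.im hvp
  simp [pow_two, hi] at r i
  have hv1 : v.re + 1 ≠ 0 := by intro h; simp [h] at r
  have hb : p.im = 0 := by
    rcases i with h | h
    · exact absurd h hv1
    · nlinarith
  rw [hb] at r hM
  have h2 : 2 ≤ p.re^2 := by nlinarith [sq_nonneg p.re]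
  have h3 : E*s < p.re := by
    apply lt_of_pow_lt_pow_left₀ 2 ha.le
    nlinarith [pow_pos hs 2]
  have h4 : s < p.re := by nlinarith
  nlinarith [mul_pos (sub_pos.2 h3) (sub_pos.2 h4)]

lemma beanInv (p v w : ℂ) (hp : 0 < p.re) (hv : v = 2/p^2 - 1) (hw : Complex.exp (-2*w) = v) :
    p^2 * Complex.cosh w = Complex.exp w ∧ 1 + Complex.tanh w = p^2 := by
  have hp0 : p ≠ 0 := by rintro rfl; simp at hp
  have h1 : Complex.exp (-w) = Complex.exp w * v := by
    rw [← hw, ← Complex.exp_add]; ring_nf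
  have hc : p^2 * Complex.cosh w = Complex.exp w := by
    rw [Complex.cosh, h1, hv]; field_simp; ring
  refine ⟨hc, ?_⟩
  have hc0 : Complex.cosh w ≠ 0 := by
    intro h; rw [h] at hc; simp at hc; exact Complex.exp_ne_zero w hc.symm
  rw [Complex.tanh_eq_sinh_div_cosh]
  field_simp
  rw [mul_comm, hc, Complex.cosh_add_sinh]

lemma memM (A B s t : ℝ) (h1 : s < 1) (h2 : 1 < t) (hB : -1 < B) (hB1 : B < 1) (hBA : B < A)
    (ha : s * (1-B) ≤ 1 - A) (hb : 1 + A ≤ t*(1+B)) (x y : ℝ) (hz : x^2+y^2 < 1) :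
    (1+A*x)^2 + (A*y)^2 + s*t*((1+B*x)^2+(B*y)^2) < (s+t)*((1+A*x)*(1+B*x) + (A*y)*(B*y)) := by
  have p1 : 0 ≤ (1-s) - (A - s*B) := by linarith
  have p2 : 0 < (1-s) + (A - s*B) := by nlinarith
  have p3 : 0 ≤ (t-1) - (A - t*B) := by linarith
  have p4 : 0 < (t-1) + (A - t*B) := by nlinarith
  have n1 : 0 < 1 - (x^2+y^2) := by linarith
  have n2 : 0 ≤ 1 + 2*x + (x^2+y^2) := by nlinarith [sq_nonneg (1+x), sq_nonneg y]
  have n3 : 0 ≤ 1 - 2*x + (x^2+y^2) := by nlinarith [sq_nonneg (1-x), sq_nonneg y]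
  have q1 := mul_pos (mul_pos p2 p4) n1
  have q2 := mul_nonneg (mul_nonneg p2.le p3) n2
  have q3 := mul_nonneg (mul_nonneg p1 p4.le) n3
  have q4 := mul_nonneg (mul_nonneg p1 p3) n1.le
  nlinarith

lemma condIff (A B s t m : ℝ) (hB : -1 < B) (hB1 : B < 1) (hm : m = (s+t)/2) :
   (((1 - A*B) / (1 - B^2) ≤ m → A ≤ 1 - s * (1 - B)) ∧ (m ≤ (1 - A*B) / (1 - B^2) → A ≤ t * (1 + B) - 1)) ↔
    (s * (1-B) ≤ 1 - A ∧ 1 + A ≤ t*(1+B)) := by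
  have h : 0 < 1 - B^2 := by nlinarith
  subst hm
  rw [div_le_iff₀ h, le_div_iff₀ h]
  constructor
  · rintro ⟨h1, h2⟩
    rcases le_total (1 - A*B) ((s+t)/2*(1-B^2)) with k | k
    · have a := h1 k
      refine ⟨by linarith, ?_⟩
      refine le_of_mul_le_mul_right ?_ (by linarith : 0 < 1 - B)
      nlinarith
    · have a := h2 k
      refine ⟨?_, by linarith⟩
      refine le_of_mul_le_mul_right ?_ (by linarith : 0 < 1 + B)
      nlinarith
  · rintro ⟨h1, h2⟩
    exact ⟨fun _ => by linarith, fun _ => by linarith⟩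

lemma imZero (w : ℂ) (hw : ‖w‖ < 1) (c d : ℝ) (hc : c ≠ 0) (h : Complex.exp (2*w) * c = d) :
    Real.exp (2*w.re) * c = d := by
  have hi := congrArg Complex.im h
  have hr := congrArg Complex.re h
  simp [Complex.exp_re, Complex.exp_im, hc] at hi hr
  have hy : |w.im| < 1 := (Complex.abs_im_le_norm w).trans_lt hw
  rw [abs_lt] at hy
  have h0 := (Real.sin_eq_zero_iff_of_lt_of_lt (by linarith [Real.pi_gt_three]) (by linarith [Real.pi_gt_three])).1 hi
  rw [h0] at hr
  simpa using hr

lemma beanReal (s : ℝ) (hs : 0 < s) (hs2 : s^2 * (1 + Real.exp 1^2) = 2) (t : ℝ) (ht : 0 < t) (w : ℂ) (hw : ‖w‖ < 1)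
    (h : 1 + Complex.tanh w = (t:ℂ)^2) : s ≤ t ∧ t ≤ Real.exp 1 * s := by
  have hx : |w.re| < 1 := (Complex.abs_re_le_norm w).trans_lt hw
  rw [abs_lt] at hx
  have hee : Complex.exp w * Complex.exp (-w) = 1 := by rw [← Complex.exp_add]; simp
  have he2 : Complex.exp (2*w) = Complex.exp w * Complex.exp w := by rw [← Complex.exp_add]; ring_nf
  have hc0 : Complex.cosh w ≠ 0 := by
    intro h0
    rw [Complex.cosh] at h0
    have h1 : Complex.exp w + Complex.exp (-w) = 0 := by
      simpa using h0
    have := imZero w hw 1 (-1) one_ne_zero (by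
      push_cast; rw [he2]; linear_combination Complex.exp w * h1 - hee)
    linarith [Real.exp_pos (2*w.re)]
  rw [Complex.tanh_eq_sinh_div_cosh] at h
  field_simp at h
  rw [Complex.cosh_add_sinh, Complex.cosh] at h
  have h1 : Complex.exp (2*w) * ((2 - t^2 : ℝ):ℂ) = ((t^2:ℝ):ℂ) := by
    push_cast; rw [he2]
    linear_combination 2 * Complex.exp w * h + (t:ℂ)^2 * hee
  have hne : 2 - t^2 ≠ 0 := by
    intro h0; rw [h0] at h1; rw [Complex.ofReal_zero, mul_zero] at h1; exact (pow_pos ht 2).ne (by exact_mod_cast h1)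
  have h2 := imZero w hw _ _ hne h1
  have hE := Real.exp_pos 1
  have k1 : Real.exp (2*w.re) ≤ Real.exp 1^2 := by
    rw [← Real.exp_nat_mul]; apply Real.exp_le_exp.2; push_cast; linarith
  have k2 : 1 ≤ Real.exp (2*w.re) * Real.exp 1^2 := by
    rw [← Real.exp_nat_mul, ← Real.exp_add]; apply Real.one_le_exp; push_cast; linarith
  set E := Real.exp 1
  set u := Real.exp (2*w.re)
  have hu : 0 < u := Real.exp_pos _
  have htp := pow_pos ht 2
  have h3 : 0 < 2 - t^2 := by
    by_contra hcon
    nlinarith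
  constructor
  · apply le_of_sq_le_sq _ ht.le
    have : 2 - t^2 ≤ E^2 * t^2 := by
      rw [← h2]; nlinarith
    refine le_of_mul_le_mul_right ?_ (by positivity : 0 < 1 + E^2)
    nlinarith
  · apply le_of_sq_le_sq _ (by positivity)
    have : t^2 ≤ E^2 * (2 - t^2) := by
      rw [← h2] 
      rw [h2]; nlinarith
    refine le_of_mul_le_mul_right ?_ (by positivity : 0 < 1 + E^2)
    nlinarith

/-- (1+Az)/(1+Bz) ≺ 𝔅 iff the stated conditions on A and B hold. -/
theorem janowskiSubordBeanIff (A B : ℝ) (hB : -1 < B) (hBA : B < A) (hA : A ≤ 1) :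
    Subord (fun z => (1 + (A:ℂ)*z) / (1 + (B:ℂ)*z)) Bean ↔
      (((1 - A*B) / (1 - B^2) ≤ (1 + Real.exp 1) / Real.sqrt (2 * (1 + Real.exp 1 ^ 2)) →
          A ≤ 1 - Real.sqrt (2 / (1 + Real.exp 1 ^ 2)) * (1 - B)) ∧
        ((1 + Real.exp 1) / Real.sqrt (2 * (1 + Real.exp 1 ^ 2)) ≤ (1 - A*B) / (1 - B^2) →
          A ≤ Real.exp 1 * Real.sqrt (2 / (1 + Real.exp 1 ^ 2)) * (1 + B) - 1)) := by
  have hB1 : B < 1 := by linarith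
  obtain ⟨s, hs, hs0, hs2, hmid⟩ := sFacts
  rw [hmid, ← hs]
  have he := Real.exp_pos 1
  have he1 := Real.exp_one_gt_two
  have hs1 : s < 1 := by
    by_contra hcon
    push Not at hcon
    have h1 : 1 ≤ s^2 := by nlinarith
    have h2 : 5 ≤ 1 + Real.exp 1^2 := by nlinarith
    nlinarith
  have ht1 : 1 < Real.exp 1 * s := by nlinarith [mul_pos he hs0]
  rw [condIff A B s (Real.exp 1 * s) _ hB hB1 (by ring)]
  have hden : ∀ z ∈ unitDisk, 1 + (B:ℂ)*z ≠ 0 := by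
    intro z hz h
    have hz' : ‖z‖ < 1 := by simpa [unitDisk] using hz
    have h1 : (B:ℂ)*z = -1 := by linear_combination h
    have h2 := congrArg norm h1
    rw [norm_mul, Complex.norm_real, norm_neg, norm_one, Real.norm_eq_abs] at h2
    have h3 : |B| < 1 := abs_lt.2 ⟨hB, hB1⟩
    nlinarith [abs_nonneg B, norm_nonneg z]
  constructor
  · rintro ⟨ω, -, -, hω, hp⟩
    have hreal : ∀ x ∈ Set.Ioo (-1:ℝ) 1, s * (1 + B*x) ≤ 1 + A*x ∧ 1 + A*x ≤ Real.exp 1 * s * (1+B*x) := by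
      intro x hx
      have hxm : (x:ℂ) ∈ unitDisk := by
        simp only [unitDisk, mem_ball_zero_iff, Complex.norm_real, Real.norm_eq_abs]
        exact abs_lt.2 hx
      have hb : 0 < 1 + B*x := by nlinarith [hx.1, hx.2]
      have ha : 0 < 1 + A*x := by nlinarith [hx.1, hx.2]
      have h1 := hp x hxm
      have h2 : 1 + Complex.tanh (ω x) = (((1+A*x)/(1+B*x) : ℝ):ℂ)^2 := by
        push_cast
        simp only at h1
        rw [h1, Bean]
        have := Complex.cpow_nat_inv_pow (1 + Complex.tanh (ω x)) (n := 2) two_ne_zero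
        rw [one_div]
        exact_mod_cast this.symm
      have h3 := beanReal s hs0 hs2 _ (div_pos ha hb) _ (hω x hxm) h2
      rw [le_div_iff₀ hb, div_le_iff₀ hb] at h3
      exact h3
    have hcl : ∀ x ∈ Set.Icc (-1:ℝ) 1, s * (1 + B*x) ≤ 1 + A*x ∧ 1 + A*x ≤ Real.exp 1 * s * (1+B*x) := by
      have hc : IsClosed {x : ℝ | s * (1 + B*x) ≤ 1 + A*x ∧ 1 + A*x ≤ Real.exp 1 * s * (1+B*x)} :=
        IsClosed.inter (isClosed_le (f := fun x : ℝ => s * (1 + B*x)) (g := fun x => 1 + A*x) (by fun_prop) (by fun_prop))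
          (isClosed_le (f := fun x : ℝ => 1 + A*x) (g := fun x => Real.exp 1 * s * (1+B*x)) (by fun_prop) (by fun_prop))
      have := closure_minimal (s := Set.Ioo (-1:ℝ) 1) hreal hc
      rwa [closure_Ioo (by norm_num)] at this
    have a := (hcl (-1) (by simp)).1
    have b := (hcl 1 (by simp)).2
    constructor <;> linarith
  · rintro ⟨ha, hb⟩
    set p : ℂ → ℂ := fun z => (1 + (A:ℂ)*z) / (1 + (B:ℂ)*z) with hpdef
    have hM : ∀ z ∈ unitDisk, (p z).re^2 + (p z).im^2 + Real.exp 1 * s^2 < (1 + Real.exp 1) * s * (p z).re := by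
      intro z hz
      have hz' : z.re^2+z.im^2 < 1 := by
        have h1 : ‖z‖ < 1 := by simpa [unitDisk] using hz
        have h2 := Complex.sq_norm z
        rw [Complex.normSq_apply] at h2
        nlinarith [norm_nonneg z]
      have m := memM A B s (Real.exp 1 * s) hs1 ht1 hB hB1 hBA ha hb z.re z.im hz'
      have hq : 0 < (1+B*z.re)^2 + (B*z.im)^2 := by
        have := Complex.normSq_pos.2 (hden z hz)
        rw [Complex.normSq_apply] at this
        simp at this
        nlinarith
      have hpe : p z * (1 + (B:ℂ)*z) = 1 + (A:ℂ)*z := div_mul_cancel₀ _ (hden z hz)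
      have r := congrArg Complex.re hpe
      have i := congrArg Complex.im hpe
      simp at r i
      refine lt_of_mul_lt_mul_right ?_ hq.le
      generalize (p z).re = a at *
      generalize (p z).im = b at *
      rw [← r, ← i] at m
      nlinarith
    have hinv : ∀ z ∈ unitDisk, Complex.exp (-2 * (-(1/2) * Complex.log (2/(p z)^2 - 1))) = 2/(p z)^2 - 1 := by
      intro z hz
      have := (slit s hs0 hs2 _ (hM z hz)).2
      rw [show -2 * (-(1/2) * Complex.log (2/(p z)^2 - 1)) = Complex.log (2/(p z)^2 - 1) by ring,
        Complex.exp_log (Complex.slitPlane_ne_zero this)]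
    have hdiff : DifferentiableOn ℂ (fun z => -(1/2) * Complex.log (2/(p z)^2 - 1)) unitDisk := by
      intro z hz
      have h1 := slit s hs0 hs2 _ (hM z hz)
      have hp0 : p z ≠ 0 := by intro h; rw [h] at h1; simp at h1
      have hpd : DifferentiableAt ℂ p z :=
        DifferentiableAt.div (by fun_prop) (by fun_prop) (hden z hz)
      have h2 : DifferentiableAt ℂ (fun z => 2/(p z)^2 - 1) z :=
        (DifferentiableAt.div (by fun_prop) (hpd.pow 2) (pow_ne_zero 2 hp0)).sub_const 1
      exact ((h2.clog h1.2).const_mul _).differentiableWithinAt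
    have h00 : -(1/2) * Complex.log (2/(p 0)^2 - 1) = 0 := by
      have : (2:ℂ) - 1 = 1 := by norm_num
      simp [hpdef, this]
    refine ⟨fun z => -(1/2) * Complex.log (2/(p z)^2 - 1), hdiff.analyticOnNhd isOpen_ball, h00, ?_, ?_⟩
    · intro z hz
      by_contra hcon
      push Not at hcon
      have h0 : (0:ℂ) ∈ unitDisk := by simp [unitDisk]
      have hpc : IsPreconnected unitDisk := (convex_ball (0:ℂ) 1).isPreconnected
      have := hpc.intermediate_value h0 hz hdiff.continuousOn.norm (show (1:ℝ) ∈ _ from ⟨by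
        simp only [h00, norm_zero]; norm_num, hcon⟩)
      obtain ⟨z', hz', h1⟩ := this
      have h2 := beanInv (p z') _ _ (slit s hs0 hs2 _ (hM z' hz')).1 rfl (hinv z' hz')
      exact absurd (keyNot s hs0 hs2 _ _ h1 h2.1) (not_le.2 (hM z' hz'))
    · intro z hz
      have h1 := (slit s hs0 hs2 _ (hM z hz)).1
      have h2 := beanInv (p z) _ _ h1 rfl (hinv z hz)
      rw [Bean, h2.2, one_div, Complex.sq_cpow_two_inv h1]
end

section
/- Let A, B be real numbers with −1 < B < A ≤ 1 satisfying: A ≤ 1 − √(2/(1+e²))·(1−B) if (1−AB)/(1−B²) ≤ (1+e)/√(2(1+e²)), and A ≤ e·√(2/(1+e²))·(1+B) − 1 if (1−AB)/(1−B²) ≥ (1+e)/√(2(1+e²)). If p is analytic on 𝔻 and p ≺ (1+Az)/(1+Bz), then p ≺ 𝔅. (In class language: under these conditions on A and B, 𝒮*[A,B] ⊂ 𝒮*_𝔅.) -/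
open Complex Metric

lemma sinh_two_le {u : ℝ} (h0 : 0 ≤ u) (h1 : u ≤ 1) : Real.sinh (2*u) ≤ u * Real.sinh 2 := by
  have hc : ConvexOn ℝ (Set.Ici (0:ℝ)) Real.sinh := by
    apply convexOn_of_deriv2_nonneg (convex_Ici 0) Real.continuous_sinh.continuousOn
      Real.differentiable_sinh.differentiableOn
    · simp only [Real.deriv_sinh]; exact Real.differentiable_cosh.differentiableOn
    · intro x hx
      simp only [interior_Ici, Set.mem_Ioi] at hx
      simp only [Function.iterate_succ, Function.iterate_zero, Function.comp, id, Real.deriv_sinh, Real.deriv_cosh]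
      exact Real.sinh_nonneg_iff.2 hx.le
  have := hc.2 (x := 2) (by simp) (y := 0) (by simp) h0 (sub_nonneg.2 h1) (by ring)
  simpa [mul_comm] using this

lemma cosh_tangent_aux {u : ℝ} (h0 : 0 ≤ u) (h1 : u ≤ 1) :
    Real.cosh 2 - Real.cosh (2*u) ≤ Real.sinh 2 * (1 - u^2) := by
  have hd : ∀ x : ℝ, HasDerivAt (fun x : ℝ => Real.cosh (2*x) - Real.sinh 2 * x^2)
      (2 * Real.sinh (2*x) - Real.sinh 2 * (2*x)) x := by
    intro x
    have h2 : HasDerivAt (fun x : ℝ => 2*x) 2 x := by simpa using (hasDerivAt_id x).const_mul 2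
    have h3 := h2.cosh
    have h4 : HasDerivAt (fun x : ℝ => x^2) (2*x) x := by simpa using hasDerivAt_pow 2 x
    exact (h3.sub (h4.const_mul (Real.sinh 2))).congr_deriv (by ring)
  have ha : AntitoneOn (fun x : ℝ => Real.cosh (2*x) - Real.sinh 2 * x^2) (Set.Icc 0 1) := by
    apply antitoneOn_of_deriv_nonpos (convex_Icc 0 1)
    · exact fun x _ => (hd x).continuousAt.continuousWithinAt
    · exact fun x _ => (hd x).differentiableAt.differentiableWithinAt
    · intro x hx
      rw [interior_Icc] at hx
      rw [(hd x).deriv]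
      have := sinh_two_le hx.1.le hx.2.le
      linarith
  have := ha ⟨h0, h1⟩ ⟨zero_le_one, le_refl _⟩ h1
  simp only [mul_one, one_pow] at this
  linarith

lemma cosh_tangent {u : ℝ} (h : Real.cosh (2*u) ≤ Real.cosh 2) :
    Real.cosh 2 - Real.cosh (2*u) ≤ Real.sinh 2 * (1 - u^2) := by
  have h' := Real.cosh_le_cosh.1 h
  rw [abs_mul, abs_two] at h'
  have := cosh_tangent_aux (abs_nonneg u) (by linarith)
  rwa [sq_abs, show 2 * |u| = |2*u| by rw [abs_mul, abs_two], Real.cosh_abs] at this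

lemma cos_upper {v : ℝ} (h : |2*v| < Real.pi/2) : v^2 ≤ 0.7 * (1 - Real.cos (2*v)) := by
  rw [Real.cos_two_mul]
  have hs := Real.sin_sq_add_cos_sq v
  have hp := Real.pi_lt_d2
  rw [abs_mul, abs_two] at h
  have key : 0.89 * |v| ≤ Real.sin |v| := by
    rcases (abs_nonneg v).eq_or_lt with h0 | h0
    · rw [← h0]; simp
    · have := Real.sin_gt_sub_cube h0
      have h2 : |v|^2 ≤ 0.63 := by nlinarith
      nlinarith
  have h3 : Real.sin |v| ^2 = Real.sin v ^2 := by
    rcases abs_cases v with h | h <;> rw [h.1] <;> simp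
  have h4 : (0.89*|v|)^2 ≤ Real.sin |v|^2 := by
    have := abs_nonneg v
    gcongr
  rw [h3, mul_pow, sq_abs] at h4
  nlinarith [sq_nonneg v]

lemma re_quad (a c α γ x n : ℝ) (ha : 0 < a) (hc : 0 < c) (h1 : -a < α) (h2 : α ≤ a)
   (h3 : -c < γ) (h4 : γ ≤ c) (hn : x^2 ≤ n) (hn1 : n < 1) :
   0 < a*c + (c*α - a*γ)*x - α*γ*n := by
  have hn0 : 0 ≤ n := (sq_nonneg x).trans hn
  set t := Real.sqrt n with ht
  have ht0 : 0 ≤ t := Real.sqrt_nonneg _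
  have ht2 : t^2 = n := Real.sq_sqrt hn0
  have ht1 : t < 1 := by nlinarith
  have hx : |x| ≤ t := Real.abs_le_sqrt hn
  obtain ⟨hx1, hx2⟩ := abs_le.1 hx
  have e1 : 0 < a + α*t := by nlinarith
  have e2 : 0 < a - α*t := by nlinarith
  have e3 : 0 < c + γ*t := by nlinarith
  have e4 : 0 < c - γ*t := by nlinarith
  have f1 := mul_pos e1 e4
  have f2 := mul_pos e2 e3
  rw [← ht2]
  rcases le_total 0 (c*α - a*γ) with h | h
  · nlinarith [mul_le_mul_of_nonneg_left hx1 h]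
  · nlinarith [mul_le_mul_of_nonpos_left hx2 h]

lemma num_c (σ c : ℝ) (s1 : 0.648 < σ) (s2 : σ < 0.6481) (hc : c * (1+σ) = 2*(1-σ)) :
    0.427 < c ∧ c < 0.4272 := by
  constructor <;> nlinarith

lemma num_l (σ l : ℝ) (s1 : 0.648 < σ) (s2 : σ < 0.6481) (hlσ : l * σ^2 = 2 - 3.6*σ^2) :
    1.15 < l := by
  have : σ^2 < 0.4201 := by nlinarith
  nlinarith

lemma num_t (T : ℝ) (s1 : 0.7615 < T) (s2 : T < 0.7616) : 0.5798 < T^2 ∧ T^2 < 0.5801 := by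
  constructor <;> nlinarith

lemma num_h4 (σ T c : ℝ) (t1 : 0.7615 < T) (t2 : T < 0.7616) (c1 : 0.427 < c) (c2 : c < 0.4272)
    (hst : σ^2 = 1 - T^2) : 0 < 4 + c*(1+T^2) - 2*T*(2+c) - 1.4*σ^2 := by
  obtain ⟨u1, u2⟩ := num_t T t1 t2
  have : T * c < 0.7616 * 0.4272 := by gcongr
  have : 0.427 * 0.5798 < c * T^2 := by gcongr
  linarith

lemma num_h2 (σ T c s D : ℝ) (t1 : 0.7615 < T) (t2 : T < 0.7616) (c1 : 0.427 < c)
    (c2 : c < 0.4272) (hst : σ^2 = 1 - T^2) (hs1 : -T < s) (hD : D = T^2 - s^2) :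
    0 < 4 + c*(1+T^2) + 2*s*(2+c) - (1+c)*D - 1.4*σ^2 - 0.49*D := by
  have h4 := num_h4 σ T c t1 t2 c1 c2 hst
  have hr0 : 0 < s + T := by linarith
  have hh : 0 ≤ 2*(2+c) - (1.49+c)*(2*T) := by
    have : T * c < 0.7616 * 0.4272 := by gcongr
    linarith
  have h3 : 0 ≤ (s+T) * (2*(2+c) - (1.49+c)*(2*T)) := mul_nonneg hr0.le hh
  have h5 := mul_nonneg (by linarith : 0 ≤ 1.49 + c) (sq_nonneg (s+T))
  have : 4 + c*(1+T^2) + 2*s*(2+c) - (1+c)*D - 1.4*σ^2 - 0.49*D =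
    (4 + c*(1+T^2) - 2*T*(2+c) - 1.4*σ^2) + (s+T) * (2*(2+c) - (1.49+c)*(2*T))
     + (1.49+c) * (s+T)^2 := by rw [hD]; ring
  rw [this]; linarith

lemma conv_aux (l P Q Q0 Q1 k : ℝ) (h0 : Q0 ≤ Q) (h1 : Q < Q1)
    (e0 : 3.6*(P^2+Q0^2) - 2*l*(P*Q0) < k) (e1 : 3.6*(P^2+Q1^2) - 2*l*(P*Q1) < k) :
    3.6*(P^2+Q^2) - 2*l*(P*Q) < k := by
  by_contra hk
  push Not at hk
  have hlt : 0 < Q1 - Q0 := by linarith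
  have a0 := mul_le_mul_of_nonneg_left e0.le (by linarith : 0 ≤ Q1 - Q)
  have a1 := mul_lt_mul_of_pos_left e1 (by linarith : 0 < Q1 - Q0)
  have a0' := mul_lt_mul_of_pos_left e0 (by linarith : 0 < Q1 - Q)
  have a1' := mul_le_mul_of_nonneg_left e1.le (by linarith : 0 ≤ Q - Q0)
  have a2 := mul_le_mul_of_nonneg_left hk hlt.le
  have a3 := mul_nonneg (mul_nonneg (by linarith : 0 ≤ Q - Q0) (by linarith : 0 ≤ Q1 - Q)) hlt.le
  have : (Q1 - Q0) * (3.6*(P^2+Q^2) - 2*l*(P*Q)) = (Q1-Q) * (3.6*(P^2+Q0^2) - 2*l*(P*Q0)) +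
    (Q-Q0) * (3.6*(P^2+Q1^2) - 2*l*(P*Q1)) - 3.6 * ((Q-Q0)*(Q1-Q)*(Q1-Q0)) := by ring
  rw [this] at a2
  linarith

set_option maxHeartbeats 1000000 in
/-- core polynomial inequality -/
lemma core (e σ T P Q x y m : ℝ) (he1 : 2.7182818283 < e) (he2 : e < 2.7182818286)
    (hσ : σ * (1+e^2) = 2*e) (hT : T * (1+e^2) = e^2-1) (hm : 0 < m) (hm2 : m^2 = (1+σ)/2)
    (hP : P = x^2+y^2) (hQ0 : 0 ≤ Q) (hQ : Q^2 = 4 + P^2 - 4*(x^2-y^2))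
    (hD : P - 2*m*x + σ < 0) :
    0 < x ∧ 0 < P ∧ 0 < Q ∧ P^2+Q^2 < 4 ∧
    3.6*(P^2+Q^2) - 2*((2-σ^2)/σ^2-2.6)*(P*Q) < 4*2.6 := by
  have s1 : 0.648 < σ := by nlinarith
  have s2 : σ < 0.6481 := by nlinarith
  have t1 : 0.7615 < T := by nlinarith
  have t2 : T < 0.7616 := by nlinarith
  have hpos : 0 < 1 + e^2 := by positivity
  have hst : σ^2 + T^2 = 1 := by
    have : (σ^2 + T^2 - 1) * (1+e^2)^2 = 0 := by
      have : (σ^2 + T^2 - 1) * (1+e^2)^2 = (σ * (1+e^2))^2 + (T * (1+e^2))^2 - (1+e^2)^2 := by ring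
      rw [this, hσ, hT]; ring
    have h2 := (mul_eq_zero.1 this).resolve_right (by positivity)
    linarith
  have hP0 : 0 ≤ P := by rw [hP]; positivity
  have hx : 0 < x := by
    by_contra h
    push Not at h
    nlinarith
  have hPp : 0 < P := by rw [hP]; positivity
  have hx2 : (P+σ)^2 < 2*(1+σ)*x^2 := by
    have h1 : P + σ < 2*m*x := by linarith
    have h2 : (P+σ)^2 < (2*m*x)^2 := by
      have : 0 ≤ P+σ := by linarith
      gcongr
    have : (2*m*x)^2 = 4*m^2*x^2 := by ring
    rw [this, hm2] at h2
    linarith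
  have hDp : 0 < T^2 - (P-1)^2 := by
    have : 2*(1+σ)*x^2 ≤ 2*(1+σ)*P := by
      have : x^2 ≤ P := by rw [hP]; nlinarith [sq_nonneg y]
      gcongr
    nlinarith
  obtain ⟨s, hs⟩ : ∃ s, P = 1 + s := ⟨P-1, by ring⟩
  set D := T^2 - (P-1)^2 with hDd
  have hsT : s^2 < T^2 := by rw [hDd, hs] at hDp; linarith [show (1+s-1)^2 = s^2 by ring]
  obtain ⟨hs1, hs2⟩ := abs_lt_of_sq_lt_sq' hsT (by linarith)
  have hPQ0 : σ^2 < P*(2-P) := by linarith [show P*(2-P) = 1 - (P-1)^2 by ring]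
  have hP2 : P < 2 := by linarith
  have hQlow : 2 - P ≤ Q := by
    have : (2-P)^2 ≤ Q^2 := by rw [hQ]; nlinarith [sq_nonneg y]
    exact le_of_sq_le_sq this hQ0
  have hQp : 0 < Q := by linarith
  obtain ⟨c, hc⟩ : ∃ c, c * (1+σ) = 2*(1-σ) := ⟨2*(1-σ)/(1+σ), by field_simp⟩
  obtain ⟨c1, c2⟩ := num_c σ c s1 s2 hc
  obtain ⟨u1, u2⟩ := num_t T t1 t2
  obtain ⟨R, hR⟩ : ∃ R, R = 2+2*T^2+c*D - P^2 := ⟨_, rfl⟩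
  have hQR : Q^2 < R := by
    have h1 : (1+σ) * (R - Q^2) = 4*(2*(1+σ)*x^2 - (P+σ)^2) := by
      have hy : y^2 = P - x^2 := by linarith
      rw [hR, hQ, hDd, hy]
      have hT2 : T^2 = 1 - σ^2 := by linarith
      rw [hT2]
      linear_combination (1 - σ^2 - (P-1)^2) * hc
    have : 0 < (1+σ) * (R - Q^2) := by rw [h1]; linarith
    have := pos_of_mul_pos_right this (by linarith : 0 ≤ 1+σ)
    linarith
  have hDT : D ≤ T^2 := by linarith [sq_nonneg (P-1)]
  have hcD : c*D ≤ 0.4272*0.5801 := by gcongr; linarith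
  have hS : P^2+Q^2 < 4 := by linarith
  obtain ⟨l, hl⟩ : ∃ l, l = (2-σ^2)/σ^2-2.6 := ⟨_, rfl⟩
  have hlσ : l * σ^2 = 2 - 3.6*σ^2 := by rw [hl]; field_simp; ring
  have l1 := num_l σ l s1 s2 hlσ
  have hcl : 3.6*c ≤ 2*l*0.7 := by linarith
  rw [← hl]
  set Q1 := Real.sqrt R with hQ1
  have hRp : 0 < R := by linarith [sq_nonneg Q]
  have hQ1s : Q1^2 = R := Real.sq_sqrt hRp.le
  have hQQ1 : Q < Q1 := Real.lt_sqrt_of_sq_lt hQR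
  have hPQ1 : σ^2 + 0.7*D < P*Q1 := by
    have h1 : (σ^2+0.7*D)^2 < (P*Q1)^2 := by
      rw [mul_pow, hQ1s]
      have hT2 : σ^2 = 1 - T^2 := by linarith
      have : P^2*R - (σ^2+0.7*D)^2 = D * (4 + c*(1+T^2) + 2*s*(2+c) - (1+c)*D - 1.4*σ^2 - 0.49*D) := by
        rw [hR, hDd, hT2, hs]; ring
      have h2 : 0 < 4 + c*(1+T^2) + 2*s*(2+c) - (1+c)*D - 1.4*σ^2 - 0.49*D := by
        exact num_h2 σ T c s D t1 t2 c1 c2 hT2 hs1 (by rw [hDd, hs]; ring)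
      linarith [mul_pos hDp h2]
    exact lt_of_pow_lt_pow_left₀ 2 (by positivity) h1
  have hend1 : 3.6*(P^2+Q1^2) - 2*l*(P*Q1) < 4*2.6 := by
    rw [hQ1s, hR]
    have h1 : 2*l*(σ^2 + 0.7*D) < 2*l*(P*Q1) := by gcongr
    have h2 := mul_le_mul_of_nonneg_right hcl hDp.le
    linarith
  have hend0 : 3.6*(P^2+(2-P)^2) - 2*l*(P*(2-P)) < 4*2.6 := by
    have h1 : 2*l*σ^2 < 2*l*(P*(2-P)) := by gcongr
    linarith
  exact ⟨hx, hPp, hQp, hS, conv_aux l P Q (2-P) Q1 _ hQlow hQQ1 hend0 hend1⟩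

lemma norm_log_lt (w : ℂ) (m : ℝ) (hm : 0 < m)
    (hm2 : m^2 = (1 + 2 * Real.exp 1/(1+Real.exp 1^2))/2)
    (hw : Complex.normSq w - 2*m*w.re + 2 * Real.exp 1/(1+Real.exp 1^2) < 0) :
    0 < w.re ∧ 2 - w^2 ≠ 0 ∧ 0 < (w^2/(2-w^2)).re ∧ ‖Complex.log (w^2/(2-w^2)) / 2‖ < 1 := by
  obtain ⟨e, he⟩ : ∃ e, e = Real.exp 1 := ⟨_, rfl⟩
  have he1 := Real.exp_one_gt_d9
  have he2 := Real.exp_one_lt_d9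
  have hee : Real.exp 2 = e^2 := by rw [he, ← Real.exp_nat_mul]; norm_num
  have hee' : Real.exp (-2) = 1/e^2 := by rw [Real.exp_neg, hee, one_div]
  rw [← he] at he1 he2 hm2 hw
  have hep : 0 < e := by linarith
  obtain ⟨σ, hσ⟩ : ∃ σ, σ = 2 * e/(1+e^2) := ⟨_, rfl⟩
  rw [← hσ] at hm2 hw
  have hσ' : σ * (1+e^2) = 2*e := by rw [hσ]; field_simp
  have hnP : Complex.normSq w = w.re^2 + w.im^2 := by rw [Complex.normSq_apply]; ring
  have hPn : Complex.normSq w = ‖w^2‖ := by rw [norm_pow, Complex.normSq_eq_norm_sq]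
  have hQ2 : ‖2 - w^2‖^2 = 4 + (Complex.normSq w)^2 - 4*(w.re^2-w.im^2) := by
    rw [← Complex.normSq_eq_norm_sq, hnP, Complex.normSq_apply]
    simp [pow_two]
    ring
  obtain ⟨hx, hP, hQ, hS, hmain⟩ := core e σ ((e^2-1)/(1+e^2)) (Complex.normSq w) ‖2-w^2‖ w.re w.im m
    he1 he2 hσ' (by field_simp) hm hm2 hnP (norm_nonneg _) hQ2 hw
  have hne : 2 - w^2 ≠ 0 := norm_pos_iff.1 hQ
  have hwne : w ≠ 0 := by rintro rfl; simp at hx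
  obtain ⟨q, hq⟩ : ∃ q, q = w^2/(2-w^2) := ⟨_, rfl⟩
  have hqne : q ≠ 0 := by rw [hq]; exact div_ne_zero (pow_ne_zero 2 hwne) hne
  obtain ⟨P, hPd⟩ : ∃ P, P = Complex.normSq w := ⟨_, rfl⟩
  obtain ⟨Q, hQd⟩ : ∃ Q, Q = ‖2-w^2‖ := ⟨_, rfl⟩
  have hqn : ‖q‖ = P/Q := by rw [hq, norm_div, ← hPn, hPd, hQd]
  have hqre : q.re = (4 - (P^2+Q^2))/(2*Q^2) := by
    rw [hq, Complex.div_re, Complex.normSq_eq_norm_sq, ← hQd]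
    rw [← hQd] at hQ2 hQ
    field_simp
    rw [hQ2, hPd, hnP]
    simp [pow_two]
    ring
  rw [← hPd] at hP hS hmain
  rw [← hQd] at hQ hS hmain
  have hqpos : 0 < q.re := by
    rw [hqre]; apply div_pos <;> [linarith; positivity]
  rw [← hq]
  refine ⟨hx, hne, hqpos, ?_⟩
  obtain ⟨u, hu⟩ : ∃ u, u = Real.log ‖q‖ / 2 := ⟨_, rfl⟩
  obtain ⟨v, hv⟩ : ∃ v, v = Complex.arg q / 2 := ⟨_, rfl⟩
  have h2u : 2*u = Real.log ‖q‖ := by rw [hu]; ring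
  have h2v : 2*v = Complex.arg q := by rw [hv]; ring
  have hch : Real.cosh (2*u) = (P^2+Q^2)/(2*(P*Q)) := by
    rw [h2u, Real.cosh_eq, Real.exp_neg, Real.exp_log (norm_pos_iff.2 hqne), hqn]
    field_simp
  have hco : Real.cos (2*v) = (4 - (P^2+Q^2))/(2*(P*Q)) := by
    rw [h2v, Complex.cos_arg hqne, hqre, hqn]
    field_simp
  have hC2 : Real.cosh 2 = (2-σ^2)/σ^2 := by
    rw [Real.cosh_eq, hee, hee', hσ]; field_simp; ring
  have hS2 : 0.7 * Real.sinh 2 ≤ 2.6 := by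
    have h1 : e^2 < 7.39 := by nlinarith
    have h2 : 1/7.39 < 1/e^2 := by gcongr
    rw [Real.sinh_eq, hee, hee']
    norm_num at h2 ⊢
    linarith
  have hv2 := cos_upper (v := v) (by rw [h2v]; exact Complex.abs_arg_lt_pi_div_two_iff.2 (Or.inl hqpos))
  have hPQ : 0 < P*Q := mul_pos hP hQ
  have hkey : 2.6 * (1 - Real.cos (2*v)) < Real.cosh 2 - Real.cosh (2*u) := by
    rw [hch, hco, hC2]
    have : (2-σ^2)/σ^2 - (P^2+Q^2)/(2*(P*Q)) - 2.6 * (1 - (4 - (P^2+Q^2))/(2*(P*Q))) =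
      (4*2.6 - (3.6*(P^2+Q^2) - 2*((2-σ^2)/σ^2-2.6)*(P*Q))) / (2*(P*Q)) := by
      generalize (2-σ^2)/σ^2 = C
      field_simp
      ring
    have h2 : 0 < (4*2.6 - (3.6*(P^2+Q^2) - 2*((2-σ^2)/σ^2-2.6)*(P*Q))) / (2*(P*Q)) := by
      apply div_pos <;> linarith
    linarith
  have hcv := Real.cos_le_one (2*v)
  have ht := cosh_tangent (u := u) (by linarith)
  have hsp : 0 < Real.sinh 2 := Real.sinh_pos_iff.2 (by norm_num)
  have hfin : u^2 + v^2 < 1 := by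
    have h1 : Real.sinh 2 * v^2 ≤ Real.sinh 2 * (0.7 * (1 - Real.cos (2*v))) := by gcongr
    have h2 : (0.7 * Real.sinh 2) * (1 - Real.cos (2*v)) ≤ 2.6 * (1 - Real.cos (2*v)) := by
      apply mul_le_mul_of_nonneg_right hS2; linarith
    have h3 : Real.sinh 2 * (u^2+v^2) < Real.sinh 2 * 1 := by linarith
    exact lt_of_mul_lt_mul_left h3 hsp.le
  have hre : (Complex.log q / 2).re = u := by
    rw [hu, ← Complex.log_re]; simp
  have him : (Complex.log q / 2).im = v := by
    rw [hv, ← Complex.log_im]; simp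
  have : ‖Complex.log q / 2‖^2 < 1 := by
    rw [← Complex.normSq_eq_norm_sq, Complex.normSq_apply, hre, him]; linarith
  exact (sq_lt_one_iff₀ (norm_nonneg _)).1 this

lemma bean_log (w : ℂ) (hx : 0 < w.re) (hne : 2 - w^2 ≠ 0) :
    Bean (Complex.log (w^2/(2-w^2)) / 2) = w := by
  have hw : w ≠ 0 := by rintro rfl; simp at hx
  have hq : w^2/(2-w^2) ≠ 0 := div_ne_zero (pow_ne_zero 2 hw) hne
  have h1 : 1 + Complex.tanh (Complex.log (w^2/(2-w^2)) / 2) = w^2 := by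
    set L := Complex.log (w^2/(2-w^2)) / 2 with hL
    have hE : Complex.exp L * Complex.exp L = w^2/(2-w^2) := by
      rw [← Complex.exp_add, hL, add_halves, Complex.exp_log hq]
    have hE0 := Complex.exp_ne_zero L
    rw [eq_div_iff hne] at hE
    have hs : Complex.exp L * Complex.exp L + 1 ≠ 0 := by
      intro h
      have : Complex.exp L * Complex.exp L = -1 := by linear_combination h
      rw [this] at hE
      have : (2:ℂ) = 0 := by linear_combination -hE
      norm_num at this
    rw [Complex.tanh_eq_sinh_div_cosh, Complex.sinh, Complex.cosh, Complex.exp_neg]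
    have hs' : Complex.exp L ^ 2 + 1 ≠ 0 := by rwa [pow_two]
    field_simp
    linear_combination hE
  rw [Bean, h1, one_div, Complex.sq_cpow_two_inv hx]

theorem janowskiClassSubsetBean (A B : ℝ) (hB : -1 < B) (hBA : B < A) (hA : A ≤ 1)
    (hcond1 : (1 - A*B) / (1 - B^2) ≤ (1 + Real.exp 1) / Real.sqrt (2 * (1 + Real.exp 1 ^ 2)) →
      A ≤ 1 - Real.sqrt (2 / (1 + Real.exp 1 ^ 2)) * (1 - B))
    (hcond2 : (1 + Real.exp 1) / Real.sqrt (2 * (1 + Real.exp 1 ^ 2)) ≤ (1 - A*B) / (1 - B^2) →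
      A ≤ Real.exp 1 * Real.sqrt (2 / (1 + Real.exp 1 ^ 2)) * (1 + B) - 1)
    (p : ℂ → ℂ) (hp : AnalyticOnNhd ℂ p unitDisk)
    (hsub : Subord p (fun z => (1 + (A:ℂ)*z) / (1 + (B:ℂ)*z))) :
    Subord p Bean := by
  obtain ⟨e, he⟩ : ∃ e, e = Real.exp 1 := ⟨_, rfl⟩
  have he1 := Real.exp_one_gt_d9
  have he2 := Real.exp_one_lt_d9
  rw [← he] at he1 he2 hcond1 hcond2
  obtain ⟨b, hb⟩ : ∃ b, b = Real.sqrt (2 / (1 + e^2)) := ⟨_, rfl⟩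
  have hb0 : 0 < b := by rw [hb]; positivity
  have hb2 : b^2 = 2/(1+e^2) := by rw [hb]; exact Real.sq_sqrt (by positivity)
  have hb2' : b^2 * (1+e^2) = 2 := by rw [hb2]; field_simp
  have hmid : (1 + e) / Real.sqrt (2 * (1 + e ^ 2)) = (1+e)*b/2 := by
    have h1 : Real.sqrt (2 * (1 + e ^ 2)) = 2 / b := by
      rw [Real.sqrt_eq_iff_eq_sq (by positivity) (by positivity), div_pow, hb2]
      field_simp
    rw [h1]; field_simp
  rw [hmid, ← hb] at hcond1 hcond2
  have hbs : b^2 < 1 := by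
    have : 7 < e^2 := by nlinarith
    nlinarith [sq_nonneg b]
  have hb1 : b < 1 := (sq_lt_one_iff₀ hb0.le).1 hbs
  have hbb1 : 1 < e*b := by
    have h1 : 1 < (e*b)^2 := by rw [mul_pow]; linarith
    exact (one_lt_sq_iff₀ (by positivity)).1 h1
  have hB1 : 0 < 1 - B := by linarith
  have hB2 : 0 < 1 + B := by linarith
  have hcen : (1 - A*B)/(1-B^2) = ((1-A)/(1-B) + (1+A)/(1+B))/2 := by
    have : 1 - B^2 = (1-B)*(1+B) := by ring
    rw [this]; field_simp; ring
  have hcen2 : (1+e)*b/2 = (b + e*b)/2 := by ring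
  rw [hcen, hcen2] at hcond1 hcond2
  have e1 : b ≤ (1-A)/(1-B) ↔ A ≤ 1 - b*(1-B) := by
    rw [le_div_iff₀ hB1]; constructor <;> intro h <;> linarith
  have e2 : (1+A)/(1+B) ≤ e*b ↔ A ≤ e*b*(1+B) - 1 := by
    rw [div_le_iff₀ hB2]; constructor <;> intro h <;> linarith
  rw [← e1] at hcond1
  rw [← e2] at hcond2
  have hboth : b ≤ (1-A)/(1-B) ∧ (1+A)/(1+B) ≤ e*b := by
    rcases le_total (((1-A)/(1-B) + (1+A)/(1+B))/2) ((b + e*b)/2) with h | h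
    · have := hcond1 h; exact ⟨this, by linarith⟩
    · have := hcond2 h; exact ⟨by linarith, this⟩
  obtain ⟨g1, g2⟩ := hboth
  rw [e1] at g1
  rw [e2] at g2
  have hσ : 2*e/(1+e^2) = b*(e*b) := by
    have : b*(e*b) = e*b^2 := by ring
    rw [this, hb2]; field_simp
  -- the Janowski image lies in the disk
  have hdisk : ∀ z : ℂ, ‖z‖ < 1 → 
      Complex.normSq ((1 + (A:ℂ)*z) / (1 + (B:ℂ)*z)) - 2*((b+e*b)/2)*((1 + (A:ℂ)*z) / (1 + (B:ℂ)*z)).re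
        + b*(e*b) < 0 := by
    intro z hz
    have hn : Complex.normSq z < 1 := by
      rw [Complex.normSq_eq_norm_sq]; exact (sq_lt_one_iff₀ (norm_nonneg _)).2 hz
    have hn' : Complex.normSq z = z.re^2+z.im^2 := by rw [Complex.normSq_apply]; ring
    have hBlt : |B| < 1 := abs_lt.2 ⟨hB, by linarith⟩
    have hden : 1 + (B:ℂ)*z ≠ 0 := by
      intro h
      have : (B:ℂ)*z = -1 := by linear_combination h
      have h2 : ‖(B:ℂ)*z‖ = 1 := by rw [this]; simp
      rw [norm_mul, Complex.norm_real, Real.norm_eq_abs] at h2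
      nlinarith [abs_nonneg B, norm_nonneg z]
    have hk := re_quad (1-b) (e*b-1) (A-b*B) (A-e*b*B) z.re (Complex.normSq z) (by linarith) (by linarith)
      (by nlinarith) (by linarith) (by nlinarith) (by linarith) (by rw [hn']; nlinarith [sq_nonneg z.im]) hn
    have hN : 0 < Complex.normSq (1 + (B:ℂ)*z) := Complex.normSq_pos.2 hden
    have hNe : Complex.normSq (1 + (B:ℂ)*z) = (1+B*z.re)^2 + (B*z.im)^2 := by
      rw [Complex.normSq_apply]; simp; ring
    rw [map_div₀, Complex.div_re]
    have : Complex.normSq (1 + (A:ℂ)*z) / Complex.normSq (1 + (B:ℂ)*z) - 2*((b+e*b)/2)*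
        ((1 + (A:ℂ)*z).re * (1 + (B:ℂ)*z).re / Complex.normSq (1 + (B:ℂ)*z)
        + (1 + (A:ℂ)*z).im * (1 + (B:ℂ)*z).im / Complex.normSq (1 + (B:ℂ)*z)) + b*(e*b) = 
        -((1-b)*(e*b-1) + ((e*b-1)*(A-b*B) - (1-b)*(A-e*b*B))*z.re - (A-b*B)*(A-e*b*B)*Complex.normSq z)
          / Complex.normSq (1 + (B:ℂ)*z) := by
      have hA' : Complex.normSq (1 + (A:ℂ)*z) = (1+A*z.re)^2 + (A*z.im)^2 := by
        rw [Complex.normSq_apply]; simp; ring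
      have r1 : (1 + (A:ℂ)*z).re = 1 + A*z.re := by simp
      have r2 : (1 + (A:ℂ)*z).im = A*z.im := by simp
      have r3 : (1 + (B:ℂ)*z).re = 1 + B*z.re := by simp
      have r4 : (1 + (B:ℂ)*z).im = B*z.im := by simp
      rw [r1, r2, r3, r4, hA', hn']
      generalize Complex.normSq (1 + (B:ℂ)*z) = N at hN hNe
      rw [eq_div_iff hN.ne']
      field_simp
      rw [hNe]
      ring
    rw [this]
    exact div_neg_of_neg_of_pos (by linarith) hN
  obtain ⟨φ, hφa, hφ0, hφ1, hφ⟩ := hsub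
  have hall : ∀ z ∈ unitDisk, 0 < (p z).re ∧ 2 - (p z)^2 ≠ 0 ∧ 0 < ((p z)^2/(2-(p z)^2)).re ∧
      ‖Complex.log ((p z)^2/(2-(p z)^2)) / 2‖ < 1 := by
    intro z hz
    apply norm_log_lt (p z) ((b+e*b)/2) (by positivity)
    · rw [← he, hσ]
      have : b^2 + e^2*b^2 = 2 := by linarith
      linear_combination this/4
    · rw [← he, hσ, hφ z hz]
      exact hdisk _ (hφ1 z hz)
  refine ⟨fun z => Complex.log ((p z)^2/(2-(p z)^2)) / 2, ?_, ?_, ?_, ?_⟩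
  · intro z hz
    obtain ⟨_, h2, h3, _⟩ := hall z hz
    have hpz := hp z hz
    exact (((hpz.pow 2).div (analyticAt_const.sub (hpz.pow 2)) h2).clog (Or.inl h3)).div
      analyticAt_const (by norm_num)
  · have h0 : (0:ℂ) ∈ unitDisk := by simp [unitDisk]
    have : p 0 = 1 := by rw [hφ 0 h0, hφ0]; simp
    simp only [this]
    norm_num
  · exact fun z hz => (hall z hz).2.2.2
  · intro z hz
    exact (bean_log _ (hall z hz).1 (hall z hz).2.1).symm
end

section
/- If p is analytic on 𝔻 and p ≺ 𝔅, then Re p(z) > √(2/(1+e²)) for every z ∈ 𝔻. (In class language: 𝒮*_𝔅 ⊂ 𝒮*(α) ⊂ 𝒮* with α = √(2/(1+e²)), i.e. every f ∈ 𝒮*_𝔅 is starlike of order √(2/(1+e²)).) -/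
open Complex Metric

lemma le_of_sq_le_sq0 {a b : ℝ} (h : a^2 ≤ b^2) (hb : 0 ≤ b) : a ≤ b :=
  abs_le_of_sq_le_sq' h hb |>.2

lemma bean_poly (δ : ℝ) (h0 : 0 ≤ δ) (h1 : δ ≤ 1) :
    0 < (2*(1+δ/2+δ^2/6) - (2-δ/2)*(1+δ*(1+δ/2+δ^2/6))) * (84/10+δ*(1+δ/2+δ^2/6))
      + 3*(2-δ/2)*(1+δ*(1+δ/2+δ^2/6))
      - (1+δ*(1+δ/2+δ^2/6))^2*δ*(2-δ/2)^2*(10/37) := by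
  have p2 : δ^2 ≤ 1 := pow_le_one₀ h0 h1
  have p3 : δ^3 ≤ 1 := pow_le_one₀ h0 h1
  have p4 : δ^4 ≤ 1 := pow_le_one₀ h0 h1
  have p5 : δ^5 ≤ 1 := pow_le_one₀ h0 h1
  have p9 : δ^9 ≤ 1 := pow_le_one₀ h0 h1
  have q6 : 0 ≤ δ^6 := by positivity
  have q7 : 0 ≤ δ^7 := by positivity
  have q8 : 0 ≤ δ^8 := by positivity
  ring_nf
  linarith

lemma bean_fin (δ S k w d : ℝ) (h0 : 0 ≤ δ) (h1 : δ ≤ 1) (hk : k = 1+δ/2+δ^2/6)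
    (hw : w = 1+δ*k) (hd : d = 2-δ/2) (hS : 37/10 ≤ S) (hSw : S*w ≤ 84/10 + δ*k) :
    d*(S*w-3) + w*δ*d^2/S < 2*S*k := by
  have hp := bean_poly δ h0 h1
  rw [← hk, ← hw, ← hd] at hp
  have hk0 : 0 < k := by rw [hk]; positivity
  have hw0 : 0 < w := by rw [hw]; positivity
  have hc : 2*k - d*w ≤ 0 := by
    rw [hd, hw, hk]
    have e : 2*(1+δ/2+δ^2/6) - (2-δ/2)*(1+δ*(1+δ/2+δ^2/6))
      = -(δ/2) - δ^2/6 - δ^3*(1-δ)/12 := by ring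
    rw [e]
    have : 0 ≤ δ^3*(1-δ) := mul_nonneg (by positivity) (by linarith)
    nlinarith [sq_nonneg δ]
  have h2 : (2*k-d*w)*(84/10+δ*k) ≤ (2*k-d*w)*(S*w) := mul_le_mul_of_nonpos_left hSw hc
  have h3 : w*δ*d^2/S ≤ w*δ*d^2*(10/37) := by
    rw [div_eq_mul_inv]
    apply mul_le_mul_of_nonneg_left _ (by positivity)
    rw [inv_le_comm₀ (by linarith) (by norm_num)]; linarith
  have h4 : 0 < w * (2*S*k - d*(S*w-3) - w*δ*d^2*(10/37)) := by nlinarith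
  have := pos_of_mul_pos_right h4 hw0.le
  linarith

set_option maxHeartbeats 1000000 in
lemma bean_case2 (δ X D N M : ℝ) (h0 : 0 < δ) (h1 : δ ≤ 1) (hX : 27/10 ≤ X)
    (hM : M ≤ 74/10) (hXM : X * (1+δ*(1+δ/2+δ^2/6)) ≤ M)
    (hD0 : 0 ≤ D) (hD : D ≤ δ*(2-δ/2)) (hN0 : 0 ≤ N) (hN : N^2 = (1+X)^2 - 2*X*D) :
    2*N^2 < (1+M)*(1+X-X*D+N) := by
  obtain ⟨k, hk⟩ : ∃ k, k = 1+δ/2+δ^2/6 := ⟨_, rfl⟩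
  rw [← hk] at hXM
  obtain ⟨w, hw⟩ : ∃ w, w = 1+δ*k := ⟨_, rfl⟩
  rw [← hw] at hXM
  obtain ⟨d, hd⟩ : ∃ d, d = 2-δ/2 := ⟨_, rfl⟩
  rw [← hd] at hD
  obtain ⟨S, hS⟩ : ∃ S, S = 1+X := ⟨_, rfl⟩
  rw [← hS] at hN ⊢
  have hS37 : 37/10 ≤ S := by linarith
  have hSpos : 0 < S := by linarith
  have hk0 : 0 < k := by rw [hk]; positivity
  have hw1 : 1 ≤ w := by rw [hw]; nlinarith
  have hd0 : 0 < d := by rw [hd]; linarith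
  have hfin := bean_fin δ S k w d h0.le h1 hk hw hd hS37 (by rw [hS]; nlinarith)
  have hD15 : D ≤ 3/2 := by rw [hd] at hD; nlinarith
  obtain ⟨r, hr⟩ : ∃ r, r = 1/S := ⟨_, rfl⟩
  have hrS : r * S = 1 := by rw [hr]; field_simp
  have hr0 : 0 < r := by rw [hr]; positivity
  have hr1 : r ≤ 10/37 := by rw [hr, div_le_iff₀ hSpos]; linarith
  obtain ⟨a, ha⟩ : ∃ a, a = X*D*r := ⟨_, rfl⟩
  have hXr : X*r = 1 - r := by rw [← hrS, hS]; ring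
  have haS : a*S = X*D := by rw [ha]; linear_combination (X*D)*hrS
  have ha0 : 0 ≤ a := by rw [ha]; positivity
  have haD : a ≤ D := by
    have : a = D*(1-r) := by rw [ha, ← hXr]; ring
    rw [this]; nlinarith
  have har : a*r ≤ D/4 := by
    have : a*r = D*((1-r)*r) := by rw [ha, ← hXr]; ring
    rw [this]; nlinarith [mul_nonneg hD0 (sq_nonneg (r-1/2))]
  have hL : S - a - a^2*r ≤ N := by
    obtain ⟨t, ht⟩ : ∃ t, t = a*r := ⟨_, rfl⟩
    have ht0 : 0 ≤ t := by rw [ht]; positivity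
    have ht1 : t ≤ 3/8 := by rw [ht]; linarith
    have e1 : S - a - a^2*r = S*(1-t-t^2) := by
      rw [ht]; linear_combination (a + a^2*r) * hrS
    have e2 : N^2 = S^2*(1-2*t) := by
      rw [hN, ht]; linear_combination (2*S*a) * hrS + 2*haS
    have htt : 0 ≤ 1 - 2*t - t^2 := by
      have : t^2 ≤ (3/8)^2 := pow_le_pow_left₀ ht0 ht1 2
      linarith
    rw [e1]
    refine le_of_sq_le_sq0 ?_ hN0
    rw [e2, mul_pow]
    apply mul_le_mul_of_nonneg_left _ (by positivity)
    have : 1 - 2*t - (1-t-t^2)^2 = t^2*(1 - 2*t - t^2) := by ring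
    have : 0 ≤ t^2*(1 - 2*t - t^2) := mul_nonneg (by positivity) htt
    linarith
  have ha2r : a^2*r ≤ 9/16 := by
    have : a*(a*r) ≤ 3/2*(3/8) := mul_le_mul (by linarith) (by linarith) (by positivity) (by norm_num)
    linarith
  have haS1 : a*(S+1) ≤ D*S := by
    have : a*(S+1) = X*D + a := by linear_combination haS
    rw [this, hS]; linarith
  have hK : 0 ≤ 2*S - a*(S+1) - a^2*r := by
    have : D*S ≤ 3/2*S := mul_le_mul_of_nonneg_right hD15 hSpos.le
    linarith
  obtain ⟨T, hT⟩ : ∃ T, T = 1 + X*w := ⟨_, rfl⟩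
  have hT' : T = S + X*δ*k := by rw [hT, hw, hS]; ring
  have hTM : T ≤ 1+M := by linarith
  have hTS : T ≤ S*w := by rw [hT, hS]; nlinarith
  have hT0 : 0 < T := by rw [hT]; nlinarith
  have hTr : T*r ≤ w := by
    have : T*r ≤ S*w*r := mul_le_mul_of_nonneg_right hTS hr0.le
    have e : S*w*r = w := by linear_combination w*hrS
    linarith
  have hTT : T*(S+1) - 4*S ≤ S*(S*w-3) := by
    have : T + T ≤ T + T := le_rfl
    have e : S*(S*w-3) - (T*(S+1)-4*S) = S*w - T := by
      rw [hT', hw, hS]; ring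
    linarith
  have haδ : a ≤ δ*d := by linarith
  have hB : T*(S+1) - 4*S + T*r*a ≤ S*(S*w-3) + w*(δ*d) := by
    have : T*r*a ≤ w*(δ*d) := mul_le_mul hTr haδ ha0 (by linarith)
    linarith
  have hB0 : 0 ≤ S*(S*w-3) + w*(δ*d) := by
    have : 0 ≤ S*w-3 := by nlinarith
    positivity
  have haA : a ≤ X*(δ*d)*r := by
    rw [ha]; gcongr
  have hmain : a*(T*(S+1) - 4*S + T*r*a) < 2*S*(X*δ*k) := by
    calc a*(T*(S+1) - 4*S + T*r*a) ≤ a*(S*(S*w-3) + w*(δ*d)) := mul_le_mul_of_nonneg_left hB ha0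
      _ ≤ X*(δ*d)*r*(S*(S*w-3) + w*(δ*d)) := mul_le_mul_of_nonneg_right haA hB0
      _ = X*δ*(d*(S*w-3) + w*δ*d^2/S) := by rw [hr]; field_simp
      _ < X*δ*(2*S*k) := mul_lt_mul_of_pos_left hfin (by positivity)
      _ = _ := by ring
  have h5 : T*(2*S - a*(S+1) - a^2*r) ≤ (1+M)*(2*S - a*(S+1) - a^2*r) :=
    mul_le_mul_of_nonneg_right hTM hK
  have h6 : (1+M)*(2*S - a*(S+1) - a^2*r) ≤ (1+M)*(S-X*D+N) := by
    apply mul_le_mul_of_nonneg_left _ (by linarith)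
    linarith
  have h7 : T*(2*S - a*(S+1) - a^2*r) - 2*N^2
      = 2*S*(X*δ*k) - a*(T*(S+1) - 4*S + T*r*a) := by
    rw [hN]; linear_combination (2*S)*hT' - 4*haS
  linarith

lemma bean_case1 (X C N T : ℝ) (hT : 838/100 ≤ T) (hX0 : 0 < X) (hX : X ≤ 272/100)
    (hC : -(1/2) ≤ C) (hC1 : C ≤ 1) (hN0 : 0 ≤ N) (hN : N^2 = 1 + 2*X*C + X^2) (hCX : -1 ≤ X*C ∨ X*C < -1) :
    2*N^2 < T*(1+X*C+N) := by
  rcases hCX with h | h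
  · have hN1 : N ≤ 372/100 := by
      refine le_of_sq_le_sq0 ?_ (by norm_num)
      rw [hN]; nlinarith
    have hNpos : 0 < N := by
      rcases hN0.lt_or_eq with h' | h'
      · exact h'
      · exfalso
        rw [← h'] at hN
        have : C^2 < 1 ∨ 1 ≤ C^2 := lt_or_ge _ _
        have e : 0 = (X+C)^2 + (1-C^2) := by linear_combination hN
        rcases this with h2 | h2
        · nlinarith [sq_nonneg (X+C)]
        · have : 0 ≤ C := by nlinarith
          nlinarith [mul_nonneg hX0.le this]
    nlinarith [mul_nonneg (by linarith : 0 ≤ T) (by linarith : 0 ≤ 1+X*C)]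
  · have hX2 : 2 < X := by nlinarith
    have hN1 : N ≤ 26/10 := by
      refine le_of_sq_le_sq0 ?_ (by norm_num)
      rw [hN]; nlinarith
    have hN2 : 173/100 ≤ N := by
      refine le_of_sq_le_sq0 ?_ hN0
      rw [hN]; nlinarith
    have h3 : -(136/100) ≤ X*C := by nlinarith
    nlinarith

lemma bean_real (x y N : ℝ) (hxy : x^2+y^2 < 1) (hN0 : 0 ≤ N)
    (hN : N^2 = 1 + 2*Real.exp (2*x)*Real.cos (2*y) + Real.exp (2*x)^2) :
    2*N^2 < (1+Real.exp 1^2)*(1+Real.exp (2*x)*Real.cos (2*y)+N) := by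
  have he1 := Real.exp_one_gt_d9
  have he2 := Real.exp_one_lt_d9
  have hx1 : x < 1 := by nlinarith [sq_nonneg y]
  rcases lt_or_ge x (1/2) with h | h
  · have hy : y^2 ≤ 1 := by nlinarith [sq_nonneg x]
    apply bean_case1 _ _ _ _ _ (Real.exp_pos _) _ _ (Real.cos_le_one _) hN0 hN (le_or_gt _ _)
    · nlinarith
    · have : Real.exp (2*x) ≤ Real.exp 1 := Real.exp_le_exp.mpr (by linarith)
      linarith
    · have h3 := Real.one_sub_sq_div_two_le_cos (x := y)
      rw [Real.cos_two_mul]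
      nlinarith
  · have hX : Real.exp 1 ≤ Real.exp (2*x) := Real.exp_le_exp.mpr (by linarith)
    have hexp := Real.sum_le_exp_of_nonneg (x := 2*(1-x)) (by linarith) 4
    simp only [Finset.sum_range_succ, Finset.sum_range_zero, Nat.factorial] at hexp
    have hM : Real.exp (2*x) * Real.exp (2*(1-x)) = Real.exp 1^2 := by
      rw [← Real.exp_add, ← Real.exp_nat_mul]; congr 1; push_cast; ring
    have hs : Real.sin y^2 ≤ y^2 := sq_le_sq.mpr Real.abs_sin_le_abs
    have hc : Real.cos (2*y) = 1 - 2*Real.sin y^2 := by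
      rw [Real.cos_two_mul, Real.cos_sq']; ring
    have := bean_case2 (2*(1-x)) (Real.exp (2*x)) (1 - Real.cos (2*y)) N (Real.exp 1^2)
      (by linarith) (by linarith) (by linarith) (by nlinarith)
      (by
        rw [← hM]
        apply mul_le_mul_of_nonneg_left _ (Real.exp_pos _).le
        refine le_trans (le_of_eq ?_) hexp
        push_cast; ring)
      (by linarith [Real.cos_le_one (2*y)]) (by rw [hc]; nlinarith) hN0
      (by rw [hN]; ring)
    refine lt_of_lt_of_eq this ?_
    ring

lemma bean_re (v : ℂ) (hv : ‖v‖ < 1) :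
    Real.sqrt (2 / (1 + Real.exp 1 ^ 2)) < (Bean v).re := by
  have hxy : (-v.re)^2 + (-v.im)^2 < 1 := by
    have := Complex.sq_norm v
    rw [Complex.normSq_apply] at this
    nlinarith [norm_nonneg v]
  obtain ⟨E, hE⟩ : ∃ E, E = Complex.exp (-2*v) := ⟨_, rfl⟩
  have hre : E.re = Real.exp (2*(-v.re)) * Real.cos (2*(-v.im)) := by
    rw [hE, Complex.exp_re]; simp
  have him : E.im = Real.exp (2*(-v.re)) * Real.sin (2*(-v.im)) := by
    rw [hE, Complex.exp_im]; simp
  have hN : ‖1+E‖^2 = 1 + 2*Real.exp (2*(-v.re))*Real.cos (2*(-v.im)) + Real.exp (2*(-v.re))^2 := by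
    rw [Complex.sq_norm, Complex.normSq_apply]
    simp only [Complex.add_re, Complex.add_im, Complex.one_re, Complex.one_im, hre, him]
    linear_combination (Real.exp (2*(-v.re))^2) * Real.sin_sq_add_cos_sq (2*(-v.im))
  have hmain := bean_real _ _ _ hxy (norm_nonneg _) hN
  rw [← hre] at hmain
  have hne : 1 + E ≠ 0 := by
    intro h0
    have h1 := congrArg Complex.re h0
    simp only [Complex.add_re, Complex.one_re, Complex.zero_re] at h1
    rw [h0, h1] at hmain
    simp at hmain
  have hNpos : 0 < ‖1+E‖ := norm_pos_iff.mpr hne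
  have hcosh : Complex.cosh v = Complex.exp v * (1+E) / 2 := by
    rw [Complex.cosh, hE, mul_add, ← Complex.exp_add]; ring_nf
  have hsum : Complex.cosh v + Complex.sinh v = Complex.exp v := Complex.cosh_add_sinh v
  have hz : 1 + Complex.tanh v = 2 / (1+E) := by
    have hc0 : Complex.cosh v ≠ 0 := by
      rw [hcosh]; exact div_ne_zero (mul_ne_zero (Complex.exp_ne_zero _) hne) two_ne_zero
    rw [Complex.tanh_eq_sinh_div_cosh, eq_div_iff hne, ← div_self hc0, ← add_div, hsum,
      div_self hc0]
    rw [hcosh]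
    have := Complex.exp_ne_zero v
    field_simp
  have h12 : ((1:ℂ)/2) = 2⁻¹ := by norm_num
  rw [Bean, h12, Complex.cpow_inv_two_re, hz]
  apply Real.sqrt_lt_sqrt (by positivity)
  have hnorm : ‖2/(1+E)‖ = 2/‖1+E‖ := by rw [norm_div]; simp
  have hzre : (2/(1+E)).re = 2*(1+E.re)/‖1+E‖^2 := by
    rw [Complex.div_re, Complex.sq_norm]; simp
  rw [hnorm, hzre]
  have e : (2/‖1+E‖ + 2*(1+E.re)/‖1+E‖^2)/2 = (1+E.re+‖1+E‖)/‖1+E‖^2 := by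
    field_simp; ring
  rw [e, div_lt_div_iff₀ (by positivity) (by positivity)]
  linarith

/-- p ≺ 𝔅 implies Re p(z) > √(2/(1+e²)) on 𝔻. -/
theorem beanSubsetStarlikeOrder (p : ℂ → ℂ) (hp : AnalyticOnNhd ℂ p unitDisk)
    (hsub : Subord p Bean) :
    ∀ z ∈ unitDisk, Real.sqrt (2 / (1 + Real.exp 1 ^ 2)) < (p z).re := by
  obtain ⟨ω, _, _, hω, hpω⟩ := hsub
  intro z hz
  rw [hpω z hz]
  exact bean_re _ (hω z hz)
end

section
/- Let α be a real number with 0 ≤ α < 1 − e/√(2(1+e²)), and set r_L(α) = 1 − ( (√(2/(1+e²)) − α)/(1−α) )². If p is analytic on 𝔻 and p ≺ α + (1−α)·(1+z)^{1/2} (principal square root), then for every z ∈ 𝔻 with |z| < r_L(α) one has p(z) ∈ 𝔅(𝔻), i.e. there exists u ∈ 𝔻 with p(z) = 𝔅(u). (This is the 𝒮*_𝔅-radius statement for the class 𝒮*_L(α).) -/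
open Complex Metric

lemma atanh_bound (W : ℂ) (hW : ‖W‖ < 1) :
    ‖Complex.log (1 + W) - Complex.log (1 - W)‖ ≤
      Real.log (1 + ‖W‖) - Real.log (1 - ‖W‖) := by
  have h1 := (Complex.hasSum_taylorSeries_neg_log' hW).sub
    (Complex.hasSum_taylorSeries_neg_log' (z := -W) (by simpa using hW))
  have ht : |‖W‖| < 1 := by simpa using hW
  have h2 := (Real.hasSum_pow_div_log_of_abs_lt_one ht).sub
    (Real.hasSum_pow_div_log_of_abs_lt_one (x := -‖W‖) (by simpa using hW))
  have h3 := tsum_of_norm_bounded h2 (f := fun n : ℕ => W ^ (n + 1) / ((n : ℂ) + 1) -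
    (-W) ^ (n + 1) / ((n : ℂ) + 1)) (by
      intro n
      have hn : ‖((n : ℂ) + 1)‖ = (n : ℝ) + 1 := by
        have := Complex.norm_natCast (n + 1)
        push_cast at this
        exact this
      rcases Nat.even_or_odd (n + 1) with h | h
      · simp [h.neg_pow]
      · rw [h.neg_pow, h.neg_pow]
        have e1 : W ^ (n + 1) / ((n : ℂ) + 1) - -W ^ (n + 1) / ((n : ℂ) + 1)
          = 2 * (W ^ (n + 1) / ((n : ℂ) + 1)) := by ring
        rw [e1, norm_mul, norm_div, norm_pow, hn]
        apply le_of_eq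
        simp only [Complex.norm_ofNat]
        ring)
  rw [h1.tsum_eq] at h3
  have e2 : -Complex.log (1 - W) - -Complex.log (1 - -W)
      = Complex.log (1 + W) - Complex.log (1 - W) := by
    rw [sub_neg_eq_add 1 W]; ring
  have e3 : -Real.log (1 - ‖W‖) - -Real.log (1 - -‖W‖)
      = Real.log (1 + ‖W‖) - Real.log (1 - ‖W‖) := by
    rw [sub_neg_eq_add 1 ‖W‖]; ring
  rwa [e2, e3] at h3

lemma bean_surj (q : ℂ) (hq : 0 < q.re)
    (h : ‖q ^ 2 - 1‖ < 1 - 2 / (1 + Real.exp 1 ^ 2)) : ∃ u ∈ unitDisk, q = Bean u := by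
  obtain ⟨W, hWd⟩ : ∃ W, W = q ^ 2 - 1 := ⟨_, rfl⟩
  rw [← hWd] at h
  have hE : 0 < Real.exp 1 ^ 2 := by positivity
  have hlt1 : ‖W‖ < 1 := by
    have : 0 < 2 / (1 + Real.exp 1 ^ 2) := by positivity
    linarith
  have hp : 1 + W ≠ 0 := by
    intro h0
    have : W = -1 := by linear_combination h0
    rw [this] at hlt1; simp at hlt1
  have hm : 1 - W ≠ 0 := by
    intro h0
    have : W = 1 := by linear_combination -h0
    rw [this] at hlt1; simp at hlt1
  have hb := atanh_bound W hlt1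
  have hreal : Real.log (1 + ‖W‖) - Real.log (1 - ‖W‖) < 2 := by
    have h0 := norm_nonneg W
    rw [← Real.log_div (by linarith) (by linarith), Real.log_lt_iff_lt_exp
      (div_pos (by linarith) (by linarith)), div_lt_iff₀ (by linarith)]
    have e : Real.exp 2 = Real.exp 1 ^ 2 := by
      rw [← Real.exp_nat_mul]; norm_num
    rw [e]
    have : 1 - 2 / (1 + Real.exp 1 ^ 2) = (Real.exp 1 ^ 2 - 1) / (1 + Real.exp 1 ^ 2) := by
      field_simp; ring
    rw [this, lt_div_iff₀ (by positivity)] at h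
    linarith
  refine ⟨(Complex.log (1 + W) - Complex.log (1 - W)) / 2, ?_, ?_⟩
  · rw [unitDisk, mem_ball_zero_iff, norm_div, Complex.norm_ofNat]
    linarith
  · obtain ⟨u, hu⟩ : ∃ u, u = (Complex.log (1 + W) - Complex.log (1 - W)) / 2 := ⟨_, rfl⟩
    rw [← hu]
    have e2 : Complex.exp u * Complex.exp u * (1 - W) = 1 + W := by
      rw [← Complex.exp_add, show u + u = Complex.log (1 + W) - Complex.log (1 - W) by
        rw [hu]; ring, Complex.exp_sub, Complex.exp_log hp, Complex.exp_log hm]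
      field_simp
    have hne := Complex.exp_ne_zero u
    have e3 : Complex.exp u * Complex.exp (-u) = 1 := by rw [← Complex.exp_add]; simp
    have hs : Complex.exp u + Complex.exp (-u) ≠ 0 := by
      intro h0
      have : (2 : ℂ) = 0 := by
        linear_combination (1 - W) * Complex.exp u * h0 - e2 - (1 - W) * e3
      norm_num at this
    have ht : Complex.tanh u = W := by
      rw [Complex.tanh_eq_sinh_div_cosh, Complex.sinh, Complex.cosh,
        div_div_div_cancel_right₀ (by norm_num), div_eq_iff hs]
      have : Complex.exp u * (Complex.exp u - Complex.exp (-u)) =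
          Complex.exp u * (W * (Complex.exp u + Complex.exp (-u))) := by
        linear_combination e2 - (1 + W) * e3
      exact mul_left_cancel₀ hne this
    rw [Bean, ht, hWd, one_div, show 1 + (q ^ 2 - 1) = q ^ 2 by ring, Complex.sq_cpow_two_inv hq]

lemma sqrt_facts (w : ℂ) (hw : ‖w‖ < 1) :
    Real.sqrt (1 - ‖w‖) ≤ ((1 + w) ^ ((1:ℂ)/2)).re ∧
    ((1 + w) ^ ((1:ℂ)/2)) ^ 2 = 1 + w ∧
    ‖(1 + w) ^ ((1:ℂ)/2) - 1‖ ≤ 1 - Real.sqrt (1 - ‖w‖) := by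
  have hsq : ((1 + w) ^ ((1:ℂ)/2)) ^ 2 = 1 + w := by
    rw [one_div]; exact Complex.cpow_nat_inv_pow (1 + w) two_ne_zero
  have hre0 : 0 ≤ ((1 + w) ^ ((1:ℂ)/2)).re := by
    rw [Complex.cpow_def]
    split_ifs with h1 h2
    · norm_num at h2
    · simp
    · rw [Complex.exp_re]
      apply mul_nonneg (Real.exp_pos _).le
      apply Real.cos_nonneg_of_mem_Icc
      have e : (Complex.log (1 + w) * (1 / 2)).im = Complex.arg (1 + w) / 2 := by
        rw [show (1 / 2 : ℂ) = ((1 / 2 : ℝ) : ℂ) by norm_num, Complex.im_mul_ofReal,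
          Complex.log_im]
        ring
      rw [e]
      have := Complex.neg_pi_lt_arg (1 + w)
      have := Complex.arg_le_pi (1 + w)
      constructor <;> linarith
  generalize (1 + w) ^ ((1:ℂ)/2) = s at *
  have hr : Real.sqrt (1 - ‖w‖) ≤ s.re := by
    apply Real.sqrt_le_iff.2 ⟨hre0, ?_⟩
    have h1 : s.re ^ 2 - s.im ^ 2 = 1 + w.re := by
      have := congrArg Complex.re hsq
      simp [pow_two] at this
      nlinarith
    have h2 : s.re ^ 2 + s.im ^ 2 = ‖1 + w‖ := by
      rw [← hsq, norm_pow, Complex.sq_norm, Complex.normSq_apply]; ring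
    have h3 : 1 - ‖w‖ ≤ ‖1 + w‖ := by
      have := norm_sub_norm_le (1 : ℂ) (-w)
      simpa using this
    have h4 := (abs_le.1 (Complex.abs_re_le_norm w)).1
    linarith
  refine ⟨hr, hsq, ?_⟩
  have hk0 := Real.sqrt_nonneg (1 - ‖w‖)
  have hk2 : Real.sqrt (1 - ‖w‖) ^ 2 = 1 - ‖w‖ := Real.sq_sqrt (by linarith)
  have hm : ‖s - 1‖ * ‖s + 1‖ = ‖w‖ := by
    rw [← norm_mul]; congr 1; linear_combination hsq
  have hp : 1 + Real.sqrt (1 - ‖w‖) ≤ ‖s + 1‖ := by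
    have := Complex.re_le_norm (s + 1)
    simp at this
    linarith
  have h5 : ‖s - 1‖ * (1 + Real.sqrt (1 - ‖w‖)) ≤ ‖w‖ := by
    exact (mul_le_mul_of_nonneg_left hp (norm_nonneg _)).trans hm.le
  nlinarith

/-- 𝒮*_𝔅-radius for the class 𝒮*_L(α). -/
theorem beanRadiusSqrtShifted (α : ℝ) (hα0 : 0 ≤ α)
    (hα1 : α < 1 - Real.exp 1 / Real.sqrt (2 * (1 + Real.exp 1 ^ 2))) (rL : ℝ)
    (hrL : rL = 1 - ((Real.sqrt (2 / (1 + Real.exp 1 ^ 2)) - α) / (1 - α)) ^ 2)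
    (p : ℂ → ℂ) (hp : AnalyticOnNhd ℂ p unitDisk)
    (hsub : Subord p (fun z => (α:ℂ) + (1 - (α:ℂ)) * (1 + z) ^ ((1:ℂ)/2))) :
    ∀ z ∈ unitDisk, ‖z‖ < rL → ∃ u ∈ unitDisk, p z = Bean u := by
  intro z hz hzr
  obtain ⟨ω, hω, hω0, hω1, hpω⟩ := hsub
  have hz1 : ‖z‖ < 1 := by simpa [unitDisk] using hz
  have hle : ‖ω z‖ ≤ ‖z‖ := by
    refine Complex.norm_le_norm_of_mapsTo_ball (R := 1) hω.differentiableOn ?_ hω0 hz1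
    intro x hx
    simpa using (hω1 x hx).le
  rw [hpω z hz]
  obtain ⟨h1, h2, h3⟩ := sqrt_facts (ω z) (hω1 z hz)
  have hα : α < 1 := by
    have : 0 < Real.exp 1 / Real.sqrt (2 * (1 + Real.exp 1 ^ 2)) := by positivity
    linarith
  have hm0 : 0 < Real.sqrt (2 / (1 + Real.exp 1 ^ 2)) := by positivity
  have hm2 : Real.sqrt (2 / (1 + Real.exp 1 ^ 2)) ^ 2 = 2 / (1 + Real.exp 1 ^ 2) :=
    Real.sq_sqrt (by positivity)
  have hk2 : Real.sqrt (1 - ‖ω z‖) ^ 2 = 1 - ‖ω z‖ := Real.sq_sqrt (by linarith)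
  have hk : (Real.sqrt (2 / (1 + Real.exp 1 ^ 2)) - α) / (1 - α) < Real.sqrt (1 - ‖ω z‖) := by
    apply Real.lt_sqrt_of_sq_lt
    linarith
  rw [div_lt_iff₀ (by linarith)] at hk
  beta_reduce
  generalize (1 + ω z) ^ ((1:ℂ)/2) = s at *
  generalize Real.sqrt (1 - ‖ω z‖) = k at *
  apply bean_surj
  · have : ((α:ℂ) + (1 - (α:ℂ)) * s).re = α + (1 - α) * s.re := by simp
    rw [this]
    nlinarith
  · rw [← hm2]
    generalize Real.sqrt (2 / (1 + Real.exp 1 ^ 2)) = m at *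
    have e : ((α:ℂ) + (1 - (α:ℂ)) * s) ^ 2 - 1 =
        (((1 - α) ^ 2 : ℝ) : ℂ) * ω z + ((2 * α * (1 - α) : ℝ) : ℂ) * (s - 1) := by
      push_cast
      linear_combination (1 - (α:ℂ)) ^ 2 * h2
    have c2 : 0 ≤ 2 * α * (1 - α) := mul_nonneg (by linarith) (by linarith)
    calc _ ≤ (1 - α) ^ 2 * ‖ω z‖ + 2 * α * (1 - α) * ‖s - 1‖ := by
          rw [e]
          refine (norm_add_le _ _).trans (le_of_eq ?_)
          rw [norm_mul, norm_mul, Complex.norm_real, Complex.norm_real, Real.norm_of_nonneg c2,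
            Real.norm_of_nonneg (sq_nonneg _)]
      _ ≤ (1 - α) ^ 2 * (1 - k ^ 2) + 2 * α * (1 - α) * (1 - k) := by
          rw [hk2, sub_sub_cancel]
          gcongr
      _ = 1 - (α + (1 - α) * k) ^ 2 := by ring
      _ < 1 - m ^ 2 := by
          have : m < α + (1 - α) * k := by linarith
          have := pow_lt_pow_left₀ this hm0.le two_ne_zero
          linarith
end

section
/- Let α be a real number with √(2/(1+e²)) < α < 1. If p is analytic on 𝔻 and p ≺ 𝔅, then for every z ∈ 𝔻 with |z| < (1/2)·log((2−α²)/α²) one has Re p(z) > α. (In class language: every f ∈ 𝒮*_𝔅 is starlike of order α in the disk |z| < (1/2)·log((2−α²)/α²).) -/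
open Complex Metric

lemma bean_poly_s19 (E s : ℝ) (hE : 0 ≤ E) (hs : 0 ≤ s) (hs1 : s ≤ 3/4)
    (h : E ≤ 7.4 - 6*s - 1.5*s^2) :
    0 ≤ 3*(1+E)^2 - E*s*(E^2+15) - (E*s)^2*(E-6) - (E*s)^3 := by
  -- monotone in s
  have mono : ∀ a b : ℝ, 0 ≤ a → a ≤ b → b ≤ E → 3*(1+E)^2 - b*(E^2+15) - b^2*(E-6) - b^3
      ≤ 3*(1+E)^2 - a*(E^2+15) - a^2*(E-6) - a^3 := by
    intro a b ha hab hb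
    have h1 : 0 ≤ (E^2+15) + (a+b)*(E-6) + (a^2+a*b+b^2) := by
      nlinarith [sq_nonneg (a+b-3), sq_nonneg (a-b), sq_nonneg (E - 3/2)]
    nlinarith [mul_nonneg (sub_nonneg.2 hab) h1]
  rcases le_total E 2.3 with h2 | h2
  · have := mono (E*s) (E*(3/4)) (by positivity) (by nlinarith) (by nlinarith)
    refine le_trans ?_ this
    have : 0 ≤ 3 - 5.25*E+6.375*E^2-1.734375*E^3 := by
      nlinarith [mul_nonneg (sq_nonneg E) (sub_nonneg.2 h2), sq_nonneg (E-1), sq_nonneg (E-0.8)]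
    linarith
  · have h3 : s ≤ (7.775-E)/7.5 := by
      rw [le_div_iff₀ (by norm_num)]
      nlinarith [sq_nonneg (s-1/2)]
    have h4 : E ≤ 7.4 := by nlinarith
    have := mono (E*s) (E*((7.775-E)/7.5)) (by positivity)
      (mul_le_mul_of_nonneg_left h3 hE) (mul_le_of_le_one_right hE (by
        rw [div_le_one (by norm_num)]; linarith))
    refine le_trans ?_ this
    obtain ⟨v, rfl⟩ : ∃ v, E = 2.3 + v := ⟨E - 2.3, by ring⟩
    have hv : 0 ≤ v := by linarith
    have hv5 : 0 ≤ 5.1 - v := by linarith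
    have a1 := mul_nonneg hv (sq_nonneg (v-1))
    have a2 := mul_nonneg (pow_nonneg hv 4) hv5
    have a3 := pow_nonneg hv 6
    have a4 := pow_nonneg hv 3
    have a5 := pow_nonneg hv 4
    ring_nf at a1 a2 ⊢
    linarith

lemma bean_exp (x : ℝ) (h : x^2 ≤ 4) : Real.exp x ≤ 1.4 + 1.5*x^2 := by
  rcases le_total x 0 with h0 | h0
  · have := Real.exp_le_one_iff.2 h0
    nlinarith [sq_nonneg x]
  · have h2 : x ≤ 2 := by nlinarith
    set u := x/2 with hu
    have hx : x = u + u := by rw [hu]; ring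
    have hu0 : 0 ≤ u := by linarith
    have hu1 : u ≤ 1 := by linarith
    have hb : Real.exp u ≤ 1 + u + 0.72*u^2 := by
      have := Real.exp_bound' hu0 hu1 (n := 4) (by norm_num)
      simp [Finset.sum_range_succ, Nat.factorial] at this
      have h3 : u^3 ≤ u^2 := by nlinarith [sq_nonneg u]
      have h4 : u^4 ≤ u^2 := by nlinarith [sq_nonneg u, pow_nonneg hu0 3]
      nlinarith
    rw [hx, Real.exp_add]
    have h5 : Real.exp u * Real.exp u ≤ (1 + u + 0.72*u^2)*(1 + u + 0.72*u^2) :=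
      mul_le_mul hb hb (Real.exp_pos u).le (by positivity)
    have h6 : 0 ≤ 0.4 -2*u+3.56*u^2-1.44*u^3-0.5184*u^4 := by
      have : 0 ≤ (1-u)*(0.4 - 1.6*u+1.96*u^2+0.52*u^3) := by
        apply mul_nonneg (by linarith)
        nlinarith [sq_nonneg (u-0.4), pow_nonneg hu0 3]
      nlinarith [pow_nonneg hu0 3, pow_nonneg hu0 4, pow_le_one₀ hu0 hu1 (n := 4)]
    nlinarith

lemma bean_key (x y ρ : ℝ) (hρ : 0 ≤ ρ) (hρ2 : ρ ≤ 2) (h : x^2+y^2 ≤ ρ^2) (m : ℝ) (hm : 0 ≤ m)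
    (hmm : m^2 = 1 + 2 * Real.exp x * Real.cos y + Real.exp x ^2) :
    0 < m ∧ 2 * m^2 ≤ (1 + Real.exp ρ) * (m + 1 + Real.exp x * Real.cos y) := by
  obtain ⟨E, hE⟩ : ∃ E, E = Real.exp x := ⟨_, rfl⟩
  have hE0 : 0 < E := hE ▸ Real.exp_pos x
  obtain ⟨τ, hτ⟩ : ∃ τ, τ = y^2/4 := ⟨_, rfl⟩
  have hτ0 : 0 ≤ τ := by rw [hτ]; positivity
  have hτ1 : τ ≤ 1 := by nlinarith [sq_nonneg x]
  obtain ⟨s, hs⟩ : ∃ s, s = (1 - Real.cos y)/2 := ⟨_, rfl⟩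
  have hc : Real.cos y = 1 - 2*s := by rw [hs]; ring
  have hs0 : 0 ≤ s := by linarith [Real.cos_le_one y]
  have hsτ : s ≤ τ - τ^2/4 := by
    have h1 : Real.cos y = 2 * Real.cos (y/2)^2 - 1 := by
      rw [← Real.cos_two_mul]; congr 1; ring
    have h2 := Real.one_sub_sq_div_two_le_cos (x := y/2)
    have h3 : 1 - (y/2)^2/2 = 1 - τ/2 := by rw [hτ]; ring
    rw [h3] at h2
    nlinarith
  have hs34 : s ≤ 3/4 := by nlinarith
  have hEs : E ≤ 7.4 - 6*s - 1.5*s^2 := by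
    have h1 := bean_exp x (by nlinarith [sq_nonneg y])
    have h2 : x^2 ≤ 4 - 4*τ := by nlinarith
    have h3 : s ≤ τ := by nlinarith
    have h4 : s^2 ≤ τ^2 := by nlinarith
    rw [← hE] at h1
    linarith
  have hF := bean_poly_s19 E s hE0.le hs0 hs34 hEs
  have hT : E*(1+s) ≤ Real.exp ρ := by
    have h1 : x + τ ≤ ρ := by
      have : x ≤ ρ := by nlinarith [sq_nonneg y]
      nlinarith
    calc E*(1+s) ≤ E * Real.exp τ := by
          apply mul_le_mul_of_nonneg_left _ hE0.le
          nlinarith [Real.add_one_le_exp τ]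
      _ = Real.exp (x+τ) := by rw [Real.exp_add, hE]
      _ ≤ _ := Real.exp_le_exp.2 h1
  rw [← hE, hc] at hmm ⊢
  have hm0 : 0 < m^2 := by nlinarith [sq_nonneg (E-1)]
  have hmpos : 0 < m := by
    rcases hm.eq_or_lt with h | h
    · simp [← h] at hm0
    · exact h
  refine ⟨hmpos, ?_⟩
  have hn : 0 ≤ m + 1 + E*(1-2*s) := by
    have : |1 + E*(1-2*s)| ≤ m := by
      apply abs_le_of_sq_le_sq _ hm
      rw [hmm]
      nlinarith [mul_nonneg (sq_nonneg E) (mul_nonneg hs0 (by linarith : 0 ≤ 1 - s))]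
    linarith [neg_abs_le (1 + E*(1-2*s))]
  have hmain : 2*m^2 - (1+E+E*s)*(1+E-2*(E*s)) ≤ (1+E+E*s)*m := by
    apply le_of_abs_le
    apply abs_le_of_sq_le_sq _ (by positivity)
    have : ((1+E+E*s)*m)^2 - (2*m^2 - (1+E+E*s)*(1+E-2*(E*s)))^2
        = 4*(E*s)*(3*(1+E)^2 - E*s*(E^2+15) - (E*s)^2*(E-6) - (E*s)^3) := by
      rw [mul_pow, hmm]; ring
    have h2 : 0 ≤ 4*(E*s)*(3*(1+E)^2 - E*s*(E^2+15) - (E*s)^2*(E-6) - (E*s)^3) :=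
      mul_nonneg (by positivity) hF
    linarith
  have := mul_le_mul_of_nonneg_right (by linarith : 1+E+E*s ≤ 1 + Real.exp ρ) hn
  nlinarith

lemma bean_re_s19 (w : ℂ) (hw : ‖w‖ ≤ 1) :
    0 ≤ (Bean w).re ∧ 2 ≤ (1 + Real.exp (2*‖w‖)) * (Bean w).re^2 := by
  obtain ⟨U, hU⟩ : ∃ U : ℂ, U = 1 + Complex.exp (-2*w) := ⟨_, rfl⟩
  have hx : (-2*w).re = -2*w.re := by simp
  have hy : (-2*w).im = -2*w.im := by simp
  have hre : U.re = 1 + Real.exp (-2*w.re) * Real.cos (-2*w.im) := by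
    rw [hU, Complex.add_re, Complex.exp_re, hx, hy]; simp
  have him : U.im = Real.exp (-2*w.re) * Real.sin (-2*w.im) := by
    rw [hU, Complex.add_im, Complex.exp_im, hx, hy]; simp
  have hsq : ‖U‖^2 = U.re^2 + U.im^2 := by
    rw [← Complex.normSq_eq_norm_sq, Complex.normSq_apply]; ring
  have hwsq : ‖w‖^2 = w.re^2 + w.im^2 := by
    rw [← Complex.normSq_eq_norm_sq, Complex.normSq_apply]; ring
  obtain ⟨hpos, hk⟩ := bean_key (-2*w.re) (-2*w.im) (2*‖w‖) (by positivity) (by linarith)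
    (by nlinarith) ‖U‖ (norm_nonneg _) (by
      rw [hsq, hre, him]
      nlinarith [Real.sin_sq_add_cos_sq (-2*w.im)])
  have hU0 : U ≠ 0 := norm_pos_iff.1 hpos
  have hZ : 1 + Complex.tanh w = 2 / U := by
    have e1 : Complex.exp (-2*w) = Complex.exp (-w) * Complex.exp (-w) := by
      rw [← Complex.exp_add]; congr 1; ring
    have e2 : Complex.exp w * Complex.exp (-w) = 1 := by
      rw [← Complex.exp_add]; simp
    have hne := Complex.exp_ne_zero w
    have hne' := Complex.exp_ne_zero (-w)
    have hcosh : Complex.exp w + Complex.exp (-w) = Complex.exp w * U := by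
      rw [hU, e1]; linear_combination (-Complex.exp (-w)) * e2
    rw [Complex.tanh_eq_sinh_div_cosh, Complex.sinh, Complex.cosh, hcosh]
    field_simp
    rw [← hcosh]; ring
  have hZ0 : 1 + Complex.tanh w ≠ 0 := by rw [hZ]; exact div_ne_zero two_ne_zero hU0
  have hB2 : Bean w * Bean w = 2 / U := by
    rw [← hZ, Bean, ← Complex.cpow_add _ _ hZ0]; norm_num
  have hB0 : 0 ≤ (Bean w).re := by
    rw [Bean, Complex.cpow_def_of_ne_zero hZ0, Complex.exp_re]
    apply mul_nonneg (Real.exp_pos _).le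
    have : (Complex.log (1 + Complex.tanh w) * (1/2)).im = (1 + Complex.tanh w).arg / 2 := by
      rw [show (1/2 : ℂ) = ((1/2 : ℝ) : ℂ) by norm_num, Complex.im_mul_ofReal, Complex.log_im]; ring
    rw [this]
    have h1 := Complex.neg_pi_lt_arg (1 + Complex.tanh w)
    have h2 := Complex.arg_le_pi (1 + Complex.tanh w)
    exact Real.cos_nonneg_of_mem_Icc ⟨by linarith, by linarith⟩
  refine ⟨hB0, ?_⟩
  have hn : ‖Bean w‖^2 * ‖U‖ = 2 := by
    rw [sq, ← norm_mul, hB2, ← norm_mul, div_mul_cancel₀ _ hU0]; simp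
  have hnB : ‖Bean w‖^2 = (Bean w).re^2 + (Bean w).im^2 := by
    rw [← Complex.normSq_eq_norm_sq, Complex.normSq_apply]; ring
  have hr : ((Bean w).re^2 - (Bean w).im^2) * ‖U‖^2 = 2 * U.re := by
    have h1 : (Bean w * Bean w).re = (2/U).re := by rw [hB2]
    rw [Complex.mul_re, Complex.div_re, Complex.normSq_eq_norm_sq] at h1
    simp at h1
    have hne : ‖U‖^2 ≠ 0 := by positivity
    field_simp at h1
    linarith
  have hfin : (Bean w).re^2 * ‖U‖^2 = ‖U‖ + U.re := by
    rw [hnB] at hn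
    have : ((Bean w).re ^ 2 + (Bean w).im ^ 2) * ‖U‖^2 = 2*‖U‖ := by rw [← hn]; ring
    linarith
  have hk' : 2 * ‖U‖^2 ≤ ((1 + Real.exp (2*‖w‖)) * (Bean w).re^2) * ‖U‖^2 := by
    rw [mul_assoc, hfin, hre]
    linarith
  exact le_of_mul_le_mul_right hk' (by positivity)

/-- functions subordinate to 𝔅 are starlike of order α in
|z| < (1/2)·log((2−α²)/α²), for √(2/(1+e²)) < α < 1. -/
theorem beanStarlikeOrderRadius (α : ℝ)
    (hα0 : Real.sqrt (2 / (1 + Real.exp 1 ^ 2)) < α) (hα1 : α < 1)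
    (p : ℂ → ℂ) (hp : AnalyticOnNhd ℂ p unitDisk) (hsub : Subord p Bean) :
    ∀ z ∈ unitDisk, ‖z‖ < (1/2) * Real.log ((2 - α^2) / α^2) → α < (p z).re := by
  intro z hz hlt
  obtain ⟨ω, hω, hω0, hω1, hpω⟩ := hsub
  have hα : 0 < α := lt_of_le_of_lt (Real.sqrt_nonneg _) hα0
  have hz1 : ‖z‖ < 1 := by simpa [unitDisk] using hz
  have hsch : ‖ω z‖ ≤ ‖z‖ := by
    apply Complex.norm_le_norm_of_mapsTo_ball (R := 1) (hω.differentiableOn) _ hω0 hz1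
    intro v hv
    have := hω1 v hv
    simpa using this.le
  rw [hpω z hz]
  obtain ⟨h0, h1⟩ := bean_re_s19 (ω z) (hω1 z hz).le
  have hpos : 0 < (2 - α^2)/α^2 := by
    apply div_pos _ (by positivity)
    nlinarith
  have hexp : Real.exp (2*‖ω z‖) < (2 - α^2)/α^2 := by
    rw [← Real.lt_log_iff_exp_lt hpos]; linarith
  have hexp2 : (1 + Real.exp (2*‖ω z‖)) * α^2 < 2 := by
    rw [lt_div_iff₀ (by positivity)] at hexp
    linarith
  have h2 : α^2 < (Bean (ω z)).re^2 := by
    have h3 : 0 < 1 + Real.exp (2*‖ω z‖) := by positivity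
    exact lt_of_mul_lt_mul_left (hexp2.trans_le h1) h3.le
  exact lt_of_pow_lt_pow_left₀ 2 h0 h2
end
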